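/- arXiv:0806.4687 — 7 statements merged into one kernel-verified Lean document; each statement's English description precedes it below -/
import Mathlib

section
/- Let G be the free group on generators a_1,…,a_n, let H be a free group of rank greater than 1, let φ, ψ : G → H be group homomorphisms, and let u, v ∈ H. Form the (n+2)-tuple t = (φ(a_1),…,φ(a_n), u, v) of elements of H. If t has remnant and |Rem_t φ(a_i)| ≥ |ψ(a_i)| for every i ∈ {1,…,n}, then there is no z ∈ G with u = φ(z)·v·ψ(z)⁻¹; that is, u and v lie in distinct doubly-twisted conjugacy classes with respect to (φ, ψ). -/
/-- Half the total cancellation in the product `x * y` of elements of a free group: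
`(|x| + |y| - |x*y|) / 2`. -/
def cancelLen {β : Type} [DecidableEq β] (x y : FreeGroup β) : ℕ :=
  (FreeGroup.norm x + FreeGroup.norm y - FreeGroup.norm (x * y)) / 2

/-- `x` or `x⁻¹`, according to the sign `b` (`true` = exponent `1`, `false` = exponent `-1`). -/
def pmPow {β : Type} [DecidableEq β] (b : Bool) (x : FreeGroup β) : FreeGroup β :=
  if b then x else x⁻¹

/-- The left cancellation `L_i` of the `i`-th entry of the tuple `t`: the maximum of
`(|h_j^α| + |h_i| - |h_j^α * h_i|)/2` over pairs `(j, α)` with `(j, α) ≠ (i, -1)`. -/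
def leftCancel {β : Type} [DecidableEq β] {N : ℕ} (t : Fin N → FreeGroup β) (i : Fin N) : ℕ :=
  Finset.univ.sup fun p : Fin N × Bool =>
    if p.1 = i ∧ p.2 = false then 0 else cancelLen (pmPow p.2 (t p.1)) (t i)

/-- The right cancellation `R_i` of the `i`-th entry of the tuple `t`: the maximum of
`(|h_i| + |h_k^β| - |h_i * h_k^β|)/2` over pairs `(k, β)` with `(k, β) ≠ (i, -1)`. -/
def rightCancel {β : Type} [DecidableEq β] {N : ℕ} (t : Fin N → FreeGroup β) (i : Fin N) : ℕ :=
  Finset.univ.sup fun p : Fin N × Bool =>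
    if p.1 = i ∧ p.2 = false then 0 else cancelLen (t i) (pmPow p.2 (t p.1))

/-- The remnant length `|Rem_t h_i| = |h_i| - L_i - R_i` of the `i`-th entry of `t`. -/
def remLen {β : Type} [DecidableEq β] {N : ℕ} (t : Fin N → FreeGroup β) (i : Fin N) : ℕ :=
  FreeGroup.norm (t i) - leftCancel t i - rightCancel t i

/-- A tuple has remnant if `|h_i| - L_i - R_i ≥ 1` for all `i`. -/
def HasRemnant {β : Type} [DecidableEq β] {N : ℕ} (t : Fin N → FreeGroup β) : Prop :=
  ∀ i, 1 ≤ remLen t i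


def cpLen {α : Type} [DecidableEq α] : List α → List α → ℕ
  | a :: x, b :: y => if a = b then cpLen x y + 1 else 0
  | [], _ => 0
  | _ :: _, [] => 0

theorem cpLen_ultra {α : Type} [DecidableEq α] (a b c : List α) :
    min (cpLen a b) (cpLen b c) ≤ cpLen a c := by
  induction a generalizing b c with
  | nil => simp [cpLen]
  | cons x a ih =>
    rcases b with _ | ⟨y, b⟩
    · simp [cpLen]
    rcases c with _ | ⟨z, c⟩
    · simp [cpLen]
    have := ih b c
    simp only [cpLen]
    split_ifs <;> first | omega | simp_all

theorem cpLen_norm {β : Type} [DecidableEq β] (x y : List (β × Bool))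
    (hx : FreeGroup.IsReduced x) (hy : FreeGroup.IsReduced y) :
    FreeGroup.norm ((FreeGroup.mk x)⁻¹ * FreeGroup.mk y) + 2 * cpLen x y
      = x.length + y.length := by
  induction x generalizing y with
  | nil =>
    rw [← FreeGroup.one_eq_mk]
    simp [cpLen, FreeGroup.norm, hy.reduce_eq]
  | cons a x ih =>
    rcases y with _ | ⟨b, y⟩
    · rw [← FreeGroup.one_eq_mk]
      rw [mul_one, FreeGroup.norm_inv_eq]
      simp [cpLen, FreeGroup.norm, hx.reduce_eq]
    by_cases h : a = b
    · subst h
      have h1 := ih y (hx.infix (List.suffix_cons a x).isInfix)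
        (hy.infix (List.suffix_cons a y).isInfix)
      have e : (FreeGroup.mk (a :: x))⁻¹ * FreeGroup.mk (a :: y)
          = (FreeGroup.mk x)⁻¹ * FreeGroup.mk y := by
        rw [← List.singleton_append, ← List.singleton_append (l := y), ← FreeGroup.mul_mk,
          ← FreeGroup.mul_mk]
        group
      rw [e]
      simp only [cpLen, if_true, List.length_cons]
      omega
    · have hr : FreeGroup.IsReduced (FreeGroup.invRev (a :: x) ++ b :: y) := by
        have hi : FreeGroup.IsReduced (FreeGroup.invRev (a :: x)) := by
          rw [FreeGroup.isReduced_iff_reduce_eq, FreeGroup.reduce_invRev, hx.reduce_eq]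
        refine List.isChain_append.2 ⟨hi, hy, ?_⟩
        rcases a with ⟨a1, a2⟩
        rcases b with ⟨b1, b2⟩
        simp only [FreeGroup.invRev, List.map_cons, List.reverse_cons]
        simp
        rintro rfl
        cases a2 <;> cases b2 <;> simp_all
      rw [FreeGroup.inv_mk, FreeGroup.mul_mk, FreeGroup.norm, FreeGroup.toWord_mk, hr.reduce_eq]
      simp [cpLen, h]

def gp {β : Type} [DecidableEq β] (x y : FreeGroup β) : ℕ := cpLen x.toWord y.toWord

theorem gp_norm {β : Type} [DecidableEq β] (x y : FreeGroup β) :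
    FreeGroup.norm (x⁻¹ * y) + 2 * gp x y = FreeGroup.norm x + FreeGroup.norm y := by
  have := cpLen_norm x.toWord y.toWord FreeGroup.isReduced_toWord FreeGroup.isReduced_toWord
  rwa [FreeGroup.mk_toWord, FreeGroup.mk_toWord] at this

theorem gp_ultra {β : Type} [DecidableEq β] (a b c : FreeGroup β) :
    min (gp a b) (gp b c) ≤ gp a c := cpLen_ultra _ _ _

theorem cancelLen_eq {β : Type} [DecidableEq β] (x y : FreeGroup β) :
    cancelLen x y = gp x⁻¹ y := by
  have := gp_norm x⁻¹ y
  rw [inv_inv, FreeGroup.norm_inv_eq] at this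
  unfold cancelLen
  omega

theorem cancelLen_inv {β : Type} [DecidableEq β] (x y : FreeGroup β) :
    cancelLen y⁻¹ x⁻¹ = cancelLen x y := by
  unfold cancelLen
  rw [← mul_inv_rev, FreeGroup.norm_inv_eq, FreeGroup.norm_inv_eq, FreeGroup.norm_inv_eq,
    add_comm (FreeGroup.norm y)]

def Lt {β : Type} [DecidableEq β] {N : ℕ} (t : Fin N → FreeGroup β) (p : Fin N × Bool) : ℕ :=
  if p.2 then leftCancel t p.1 else rightCancel t p.1

def Rt {β : Type} [DecidableEq β] {N : ℕ} (t : Fin N → FreeGroup β) (p : Fin N × Bool) : ℕ :=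
  if p.2 then rightCancel t p.1 else leftCancel t p.1

theorem le_leftCancel {β : Type} [DecidableEq β] {N : ℕ} (t : Fin N → FreeGroup β) (i j : Fin N)
    (b : Bool) (h : ¬ (j = i ∧ b = false)) :
    cancelLen (pmPow b (t j)) (t i) ≤ leftCancel t i := by
  have := Finset.le_sup (f := fun p : Fin N × Bool =>
    if p.1 = i ∧ p.2 = false then 0 else cancelLen (pmPow p.2 (t p.1)) (t i))
    (Finset.mem_univ (j, b))
  simp only [if_neg h] at this
  exact this

theorem le_rightCancel {β : Type} [DecidableEq β] {N : ℕ} (t : Fin N → FreeGroup β) (i j : Fin N)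
    (b : Bool) (h : ¬ (j = i ∧ b = false)) :
    cancelLen (t i) (pmPow b (t j)) ≤ rightCancel t i := by
  have := Finset.le_sup (f := fun p : Fin N × Bool =>
    if p.1 = i ∧ p.2 = false then 0 else cancelLen (t i) (pmPow p.2 (t p.1)))
    (Finset.mem_univ (j, b))
  simp only [if_neg h] at this
  exact this

theorem pmPow_not {β : Type} [DecidableEq β] (b : Bool) (x : FreeGroup β) :
    (pmPow b x)⁻¹ = pmPow (!b) x := by
  cases b <;> simp [pmPow]

theorem cancel_le_Lt {β : Type} [DecidableEq β] {N : ℕ} (t : Fin N → FreeGroup β)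
    (p q : Fin N × Bool) (h : p.1 = q.1 → p.2 = q.2) :
    cancelLen (pmPow p.2 (t p.1)) (pmPow q.2 (t q.1)) ≤ Lt t q := by
  rcases p with ⟨i, b⟩
  rcases q with ⟨j, c⟩
  cases c
  · rw [← cancelLen_inv, pmPow_not, pmPow_not]
    exact le_rightCancel t j i (!b) (by simpa using h)
  · exact le_leftCancel t j i b (by simpa using h)

theorem cancel_le_Rt {β : Type} [DecidableEq β] {N : ℕ} (t : Fin N → FreeGroup β)
    (p q : Fin N × Bool) (h : p.1 = q.1 → p.2 = q.2) :
    cancelLen (pmPow p.2 (t p.1)) (pmPow q.2 (t q.1)) ≤ Rt t p := by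
  rcases p with ⟨i, b⟩
  rcases q with ⟨j, c⟩
  cases b
  · rw [← cancelLen_inv, pmPow_not, pmPow_not]
    refine le_leftCancel t i j (!c) ?_
    rintro ⟨rfl, h2⟩
    simp_all
  · refine le_rightCancel t i j c ?_
    rintro ⟨rfl, h2⟩
    simp_all

theorem norm_pmPow {β : Type} [DecidableEq β] (b : Bool) (x : FreeGroup β) :
    FreeGroup.norm (pmPow b x) = FreeGroup.norm x := by
  cases b <;> simp [pmPow, FreeGroup.norm_inv_eq]

theorem rem_add {β : Type} [DecidableEq β] {N : ℕ} (t : Fin N → FreeGroup β)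
    (hrem : HasRemnant t) (p : Fin N × Bool) :
    FreeGroup.norm (pmPow p.2 (t p.1)) = remLen t p.1 + Lt t p + Rt t p ∧ 1 ≤ remLen t p.1 := by
  rw [norm_pmPow]
  have := hrem p.1
  refine ⟨?_, this⟩
  unfold remLen at this ⊢
  unfold Lt Rt
  split_ifs <;> omega

def pr {β : Type} [DecidableEq β] {N : ℕ} (t : Fin N → FreeGroup β) (l : List (Fin N × Bool)) :
    FreeGroup β := (l.map fun p => pmPow p.2 (t p.1)).prod

theorem pr_bound {β : Type} [DecidableEq β] {N : ℕ} (t : Fin N → FreeGroup β)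
    (hrem : HasRemnant t) (l : List (Fin N × Bool)) (p : Fin N × Bool)
    (h : FreeGroup.IsReduced (p :: l)) :
    ((p :: l).map fun q => remLen t q.1).sum + Lt t p ≤ FreeGroup.norm (pr t (p :: l)) ∧
    remLen t p.1 + Lt t p ≤ gp (pr t (p :: l)) (pmPow p.2 (t p.1)) := by
  induction l generalizing p with
  | nil =>
    have h1 := rem_add t hrem p
    have h2 := gp_norm (pmPow p.2 (t p.1)) (pmPow p.2 (t p.1))
    simp only [inv_mul_cancel, FreeGroup.norm_one] at h2
    simp only [pr, List.map_cons, List.map_nil, List.prod_cons, List.prod_nil, mul_one,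
      List.sum_cons, List.sum_nil]
    omega
  | cons q l ih =>
    rw [FreeGroup.isReduced_cons_cons] at h
    obtain ⟨i1, i2⟩ := ih q h.2
    have e : pr t (p :: q :: l) = pmPow p.2 (t p.1) * pr t (q :: l) := by simp [pr]
    have hp := rem_add t hrem p
    have hq := rem_add t hrem q
    have c1 := cancel_le_Lt t p q h.1
    have c2 := cancel_le_Rt t p q h.1
    rw [cancelLen_eq] at c1 c2
    have hu := gp_ultra (pmPow p.2 (t p.1))⁻¹ (pr t (q :: l)) (pmPow q.2 (t q.1))
    have n1 := gp_norm (pmPow p.2 (t p.1))⁻¹ (pr t (q :: l))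
    have n2 := gp_norm (pr t (p :: q :: l)) (pmPow p.2 (t p.1))
    have e2 : (pr t (p :: q :: l))⁻¹ * pmPow p.2 (t p.1) = (pr t (q :: l))⁻¹ := by
      rw [e]; group
    rw [e2, FreeGroup.norm_inv_eq] at n2
    rw [inv_inv, ← e, FreeGroup.norm_inv_eq] at n1
    rw [List.map_cons, List.sum_cons]
    omega

theorem psi_bound {n : ℕ} {β : Type} [DecidableEq β] (ψ : FreeGroup (Fin n) →* FreeGroup β)
    (l : List (Fin n × Bool)) :
    FreeGroup.norm (ψ (FreeGroup.mk l)) ≤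
      (l.map fun q => FreeGroup.norm (ψ (FreeGroup.of q.1))).sum := by
  induction l with
  | nil => rw [← FreeGroup.one_eq_mk]; simp
  | cons a l ih =>
    rw [← List.singleton_append, ← FreeGroup.mul_mk, map_mul]
    refine (FreeGroup.norm_mul_le _ _).trans ?_
    have : FreeGroup.norm (ψ (FreeGroup.mk [a])) = FreeGroup.norm (ψ (FreeGroup.of a.1)) := by
      rcases a with ⟨i, b⟩
      cases b
      · have : (FreeGroup.mk [(i, false)] : FreeGroup (Fin n)) = (FreeGroup.of i)⁻¹ := rfl
        rw [this, map_inv, FreeGroup.norm_inv_eq]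
      · rfl
    simp only [List.singleton_append, List.map_cons, List.sum_cons]
    omega

theorem pr_phi {n : ℕ} {β : Type} [DecidableEq β] (φ : FreeGroup (Fin n) →* FreeGroup β)
    (t : Fin (n + 2) → FreeGroup β)
    (ht : ∀ i : Fin n, t i.castSucc.castSucc = φ (FreeGroup.of i)) (l : List (Fin n × Bool)) :
    pr t (l.map fun q => (q.1.castSucc.castSucc, q.2)) = φ (FreeGroup.mk l) := by
  induction l with
  | nil => rw [← FreeGroup.one_eq_mk]; simp [pr]
  | cons a l ih =>
    rw [← List.singleton_append, ← FreeGroup.mul_mk, map_mul, ← ih]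
    have : pmPow a.2 (t a.1.castSucc.castSucc) = φ (FreeGroup.mk [a]) := by
      rcases a with ⟨i, b⟩
      rw [ht]
      cases b
      · have : (FreeGroup.mk [(i, false)] : FreeGroup (Fin n)) = (FreeGroup.of i)⁻¹ := rfl
        rw [this, map_inv]; rfl
      · rfl
    simp [pr, this]

/-- Let `G` be the free group on `n` generators, `H` a free group of rank
greater than one, `φ ψ : G → H` homomorphisms and `u v ∈ H`. If the `(n+2)`-tuple
`t = (φ(a_1), …, φ(a_n), u, v)` has remnant and `|Rem_t φ(a_i)| ≥ |ψ(a_i)|` for every `i`,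
then there is no `z ∈ G` with `u = φ(z) * v * ψ(z)⁻¹`. -/
theorem no_doubly_twisted_conjugacy_of_remnant {n : ℕ} {β : Type} [DecidableEq β]
    [Nontrivial β]
    (φ ψ : FreeGroup (Fin n) →* FreeGroup β) (u v : FreeGroup β)
    (t : Fin (n + 2) → FreeGroup β)
    (ht : t = Fin.snoc (Fin.snoc (fun i : Fin n => φ (FreeGroup.of i)) u) v)
    (hrem : HasRemnant t)
    (hlen : ∀ i : Fin n,
      FreeGroup.norm (ψ (FreeGroup.of i)) ≤ remLen t (i.castSucc.castSucc)) :
    ¬ ∃ z : FreeGroup (Fin n), u = φ z * v * (ψ z)⁻¹ := by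
  rintro ⟨z, hz⟩
  have t1 : ∀ i : Fin n, t i.castSucc.castSucc = φ (FreeGroup.of i) := by
    intro i; rw [ht]; simp
  have t2 : t (Fin.last n).castSucc = u := by rw [ht]; simp
  have t3 : t (Fin.last (n + 1)) = v := by rw [ht]; simp
  set m : List (Fin (n + 2) × Bool) := z.toWord.map fun q => (q.1.castSucc.castSucc, q.2) with hm
  have hmem : ∀ q ∈ m, ∃ i : Fin n, q.1 = i.castSucc.castSucc := by
    intro q hq
    rw [hm, List.mem_map] at hq
    obtain ⟨a, -, rfl⟩ := hq
    exact ⟨a.1, rfl⟩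
  have hmr : FreeGroup.IsReduced m := by
    refine List.isChain_map_of_isChain _ ?_ (FreeGroup.isReduced_toWord (x := z))
    intro a b hab h
    exact hab (by simpa using h)
  have hred : FreeGroup.IsReduced (((Fin.last n).castSucc, false) ::
      (m ++ [(Fin.last (n + 1), true)])) := by
    have h1 : FreeGroup.IsReduced (m ++ [(Fin.last (n + 1), true)]) := by
      refine List.isChain_append.2 ⟨hmr, List.isChain_singleton _, ?_⟩
      intro x hx y hy hxy
      obtain ⟨i, hi⟩ := hmem x (List.mem_of_getLast? hx)
      simp only [List.head?_cons, Option.mem_def, Option.some.injEq] at hy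
      subst hy
      rw [hi] at hxy
      exact absurd hxy (Fin.castSucc_lt_last _).ne
    refine List.isChain_cons.2 ⟨?_, h1⟩
    intro y hy hxy
    exfalso
    have hy' := List.mem_of_head? hy
    rw [List.mem_append, List.mem_singleton] at hy'
    rcases hy' with hy' | rfl
    · obtain ⟨i, hi⟩ := hmem y hy'
      simp only [hi, Fin.castSucc_inj] at hxy
      exact (Fin.castSucc_lt_last i).ne hxy.symm
    · exact (Fin.castSucc_lt_last _).ne hxy
  have hb := (pr_bound t hrem _ _ hred).1
  have hp : pr t (((Fin.last n).castSucc, false) :: (m ++ [(Fin.last (n + 1), true)])) = ψ z := by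
    have := pr_phi φ t t1 z.toWord
    rw [FreeGroup.mk_toWord, ← hm] at this
    have e : pr t (((Fin.last n).castSucc, false) :: (m ++ [(Fin.last (n + 1), true)]))
        = u⁻¹ * (pr t m * v) := by
      simp [pr, pmPow, t2, t3]
    rw [e, this, hz]; group
  rw [hp] at hb
  have hs := psi_bound ψ z.toWord
  rw [FreeGroup.mk_toWord] at hs
  have hle : (z.toWord.map fun q => FreeGroup.norm (ψ (FreeGroup.of q.1))).sum ≤
      (m.map fun q => remLen t q.1).sum := by
    rw [hm, List.map_map]
    exact List.sum_le_sum fun q _ => hlen q.1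
  have hu := hrem (Fin.last n).castSucc
  simp only [List.map_cons, List.sum_cons, List.map_append, List.sum_append] at hb
  omega
end

section
/- Let G be the free group on generators a_1,…,a_n, let H be a free group of rank greater than 1, and let ψ : G → H be any group homomorphism. Then the set S = {(φ, u, v) ∈ H^n × H × H : there is no z ∈ G with u = φ(z)·v·ψ(z)⁻¹} (where the n-tuple φ is identified with the homomorphism G → H sending a_i to its i-th coordinate) is generic: lim_{p→∞} |S ∩ (H_p)^{n+2}| / |H_p|^{n+2} = 1. -/
/-- The number of elements of the free group of rank `n` of word length at most `p`,
i.e. `|H_p|`. -/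
noncomputable def ballCount (n p : ℕ) : ℕ :=
  Nat.card {w : FreeGroup (Fin n) // FreeGroup.norm w ≤ p}

namespace GenAux

open FreeGroup

theorem decomp {α : Type*} [DecidableEq α] (u : List (α × Bool)) :
    ∀ v : List (α × Bool), IsReduced u → IsReduced v →
      ∃ u1 c v1, u = u1 ++ c ∧ v = invRev c ++ v1 ∧ IsReduced (u1 ++ v1) := by
  induction u using List.reverseRecOn with
  | nil => intro v _ hv; exact ⟨[], [], v, by simp, by simp, by simpa using hv⟩
  | append_singleton u a ih =>
    intro v hu hv
    cases v with
    | nil => exact ⟨u ++ [a], [], [], by simp, by simp, by simpa using hu⟩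
    | cons b v =>
      by_cases hab : a.1 = b.1 → a.2 = b.2
      · refine ⟨u ++ [a], [], b :: v, by simp, by simp, ?_⟩
        have h2 : IsReduced ([a] ++ b :: v) := by
          simpa [isReduced_cons_cons] using ⟨hab, hv⟩
        exact IsReduced.append_overlap hu h2 (by simp)
      · push Not at hab
        obtain ⟨u1, c, v1, h1, h2, h3⟩ := ih v (hu.infix ⟨[], [a], by simp⟩)
          (hv.infix ⟨[b], [], by simp⟩)
        refine ⟨u1, c ++ [a], v1, by simp [h1], ?_, h3⟩
        have hb : b = (a.1, !a.2) := by
          ext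
          · exact hab.1.symm
          · have := hab.2
            cases h : a.2 <;> cases h' : b.2 <;> simp_all
        rw [invRev_append, h2, hb]
        simp [invRev]

theorem mul_lemma {α : Type*} [DecidableEq α] (L : ℕ) (x y : FreeGroup α)
    (h : x⁻¹.toWord.take L ≠ y.toWord.take L) (hx : 2 * L ≤ x.norm) :
    (x * y).toWord.take L = x.toWord.take L ∧ x.norm + y.norm ≤ (x * y).norm + 2 * L := by
  obtain ⟨u1, c, v1, h1, h2, h3⟩ := decomp x.toWord y.toWord isReduced_toWord isReduced_toWord
  have hxy : (x * y).toWord = u1 ++ v1 := by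
    have : x * y = mk (u1 ++ v1) := by
      rw [← mk_toWord (x := x), ← mk_toWord (x := y), h1, h2]
      simp only [← mul_mk, ← inv_mk]
      group
    rw [this, toWord_mk, h3.reduce_eq]
  have hc : c.length < L := by
    by_contra hc
    push Not at hc
    apply h
    rw [toWord_inv, h1, h2, invRev_append, List.take_append_of_le_length (by simpa using hc),
      List.take_append_of_le_length (by simpa using hc)]
  have l1 : x.norm = u1.length + c.length := by simp [FreeGroup.norm, h1]
  have l2 : y.norm = c.length + v1.length := by simp [FreeGroup.norm, h2]
  have l3 : (x * y).norm = u1.length + v1.length := by simp [FreeGroup.norm, hxy]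
  refine ⟨?_, by omega⟩
  rw [hxy, h1, List.take_append_of_le_length (by omega), List.take_append_of_le_length (by omega)]

def ev {α G : Type*} [Group G] (f : α → G) (a : α × Bool) : G := cond a.2 (f a.1) (f a.1)⁻¹

theorem ev_inv {α G : Type*} [Group G] (f : α → G) (a : α × Bool) :
    (ev f a)⁻¹ = ev f (a.1, !a.2) := by
  rcases a with ⟨i, _ | _⟩ <;> simp [ev]

theorem norm_ev {α β : Type*} [DecidableEq α] (f : β → FreeGroup α) (a : β × Bool) :
    (ev f a).norm = (f a.1).norm := by
  rcases a with ⟨i, _ | _⟩ <;> simp [ev, norm_inv_eq]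

theorem long {α β : Type*} [DecidableEq α] (L : ℕ) (f : β → FreeGroup α)
    (h1 : ∀ i, 4 * L ≤ (f i).norm)
    (h2 : ∀ a b, a ≠ b → (ev f a).toWord.take L ≠ (ev f b).toWord.take L)
    (z : List (β × Bool)) : ∀ a, IsReduced (a :: z) →
      (lift f (mk (a :: z))).toWord.take L = (ev f a).toWord.take L ∧
      2 * L * (z.length + 1) ≤ (lift f (mk (a :: z))).norm := by
  induction z with
  | nil =>
    intro a _
    have : lift f (mk [a]) = ev f a := by simp [ev]
    rw [this, norm_ev]
    refine ⟨rfl, ?_⟩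
    have := h1 a.1
    simp; omega
  | cons b z ih =>
    intro a hr
    rw [isReduced_cons_cons] at hr
    obtain ⟨i1, i2⟩ := ih b hr.2
    have e : lift f (mk (a :: b :: z)) = ev f a * lift f (mk (b :: z)) := by
      simp [ev]
    have hl := h1 a.1
    rw [← norm_ev f a] at hl
    have := mul_lemma L (ev f a) (lift f (mk (b :: z))) (by
      rw [i1, ev_inv]
      apply h2
      rintro rfl
      have := hr.1 rfl
      simp at this) (by omega)
    rw [e]
    refine ⟨this.1, ?_⟩
    have h3 := this.2
    simp only [List.length_cons]
    nlinarith

theorem long' {α β : Type*} [DecidableEq α] [DecidableEq β] (L : ℕ) (f : β → FreeGroup α)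
    (h1 : ∀ i, 4 * L ≤ (f i).norm)
    (h2 : ∀ a b, a ≠ b → (ev f a).toWord.take L ≠ (ev f b).toWord.take L)
    (z : FreeGroup β) : 2 * L * z.norm ≤ (lift f z).norm := by
  have hr := isReduced_toWord (x := z)
  have hm := mk_toWord (x := z)
  unfold FreeGroup.norm at *
  cases h : z.toWord with
  | nil => simp
  | cons a w =>
    rw [h] at hr hm
    have := (long L f h1 h2 w a hr).2
    rw [hm] at this
    simpa [FreeGroup.norm] using this

theorem hom_bound {m n : ℕ} (ψ : FreeGroup (Fin m) →* FreeGroup (Fin n)) :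
    ∃ C, ∀ z, (ψ z).norm ≤ C * z.norm := by
  refine ⟨∑ i, (ψ (of i)).norm, fun z => ?_⟩
  have key : ∀ w : List (Fin m × Bool),
      (ψ (mk w)).norm ≤ (∑ i, (ψ (of i)).norm) * w.length := by
    intro w
    induction w with
    | nil =>
      have : (mk [] : FreeGroup (Fin m)) = 1 := rfl
      simp [this]
    | cons a w ih =>
      have e : (mk (a :: w) : FreeGroup (Fin m)) = mk [a] * mk w := by simp [mul_mk]
      have h1 : (ψ (mk [a])).norm = (ψ (of a.1)).norm := by
        rcases a with ⟨i, _ | _⟩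
        · have : (mk [(i, false)] : FreeGroup (Fin m)) = (of i)⁻¹ := rfl
          rw [this, _root_.map_inv, norm_inv_eq]
        · rfl
      have h2 : (ψ (of a.1)).norm ≤ ∑ i, (ψ (of i)).norm :=
        Finset.single_le_sum (f := fun i => (ψ (of i)).norm) (fun _ _ => Nat.zero_le _)
          (Finset.mem_univ _)
      rw [e, _root_.map_mul]
      have h3 := norm_mul_le (ψ (mk [a])) (ψ (mk w))
      simp only [List.length_cons, mul_add, mul_one]
      omega
  have := key z.toWord
  rwa [mk_toWord] at this

theorem ball_finite (n p : ℕ) : {w : FreeGroup (Fin n) | w.norm ≤ p}.Finite := by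
  apply Set.Finite.of_finite_image (f := toWord) _ (toWord_injective.injOn)
  apply (List.finite_length_le (Fin n × Bool) p).subset
  rintro _ ⟨w, hw, rfl⟩
  exact hw

noncomputable def ball (n p : ℕ) : Finset (FreeGroup (Fin n)) := (ball_finite n p).toFinset

theorem mem_ball {n p : ℕ} {w : FreeGroup (Fin n)} : w ∈ ball n p ↔ w.norm ≤ p := by
  simp [ball]

theorem ballCount_eq (n p : ℕ) : ballCount n p = (ball n p).card := by
  unfold ballCount
  rw [← Nat.card_eq_finsetCard]
  exact Nat.card_congr (Equiv.subtypeEquivRight fun w => by simp [mem_ball])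

def jx {n : ℕ} (hn : 1 < n) (w : List (Fin n × Bool)) : Fin n :=
  match w with
  | [] => ⟨0, by omega⟩
  | a :: _ => if a.1 = ⟨0, by omega⟩ then ⟨1, hn⟩ else ⟨0, by omega⟩

theorem jx_red {n : ℕ} (hn : 1 < n) (w : List (Fin n × Bool)) (hw : IsReduced w) (c : Bool) :
    IsReduced ((jx hn w, c) :: w) := by
  cases w with
  | nil => exact IsReduced.singleton
  | cons a w =>
    rw [isReduced_cons_cons]
    refine ⟨fun h => ?_, hw⟩
    simp only [jx] at h
    split_ifs at h with h0
    · rw [h0] at h; simp at h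
    · exact absurd h.symm h0

theorem ball_double {n : ℕ} (hn : 1 < n) (p : ℕ) : 2 * (ball n p).card ≤ (ball n (p + 1)).card := by
  have : (Finset.univ ×ˢ ball n p : Finset (Bool × FreeGroup (Fin n))).card
      ≤ (ball n (p + 1)).card := by
    have hw : ∀ x : Bool × FreeGroup (Fin n),
        (mk ((jx hn x.2.toWord, x.1) :: x.2.toWord)).toWord
          = (jx hn x.2.toWord, x.1) :: x.2.toWord := fun x => by
      rw [toWord_mk, (jx_red hn _ isReduced_toWord _).reduce_eq]
    apply Finset.card_le_card_of_injOn
      (fun x => mk ((jx hn x.2.toWord, x.1) :: x.2.toWord))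
    · intro x hx
      simp only [Finset.coe_product, Set.mem_prod, Finset.mem_coe, mem_ball] at hx ⊢
      have := hx.2
      unfold FreeGroup.norm at *
      rw [hw]
      simpa using this
    · intro x _ y _ h
      have h' := congrArg toWord h
      simp only [hw] at h'
      simp only [List.cons.injEq, Prod.mk.injEq] at h'
      exact Prod.ext h'.1.2 (toWord_injective h'.2)
  simpa using this

theorem ball_pow {n : ℕ} (hn : 1 < n) (q L : ℕ) :
    2 ^ L * (ball n q).card ≤ (ball n (q + L)).card := by
  induction L with
  | zero => simp
  | succ L ih =>
    have := ball_double hn (q + L)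
    rw [← add_assoc, pow_succ]
    linarith

theorem inj_count {m n p q : ℕ} (i : Fin m) (E : Finset (Fin m → FreeGroup (Fin n)))
    (hE : ∀ f ∈ E, ∀ j, (f j).norm ≤ p)
    (g : (Fin m → FreeGroup (Fin n)) → FreeGroup (Fin n))
    (hg : ∀ f ∈ E, (g f).norm ≤ q)
    (hinj : ∀ f ∈ E, ∀ f' ∈ E, (∀ j, j ≠ i → f j = f' j) → g f = g f' → f i = f' i) :
    E.card * (ball n p).card ≤ (ball n q).card * (ball n p).card ^ m := by
  have h1 : E.card ≤ (Fintype.piFinset (fun j => if j = i then ball n q else ball n p)).card := by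
    apply Finset.card_le_card_of_injOn (fun f => Function.update f i (g f))
    · intro f hf
      simp only [Finset.mem_coe, Fintype.mem_piFinset]
      intro j
      by_cases hj : j = i
      · subst hj; simpa [mem_ball] using hg f hf
      · simpa [hj, mem_ball] using hE f hf j
    · intro f hf f' hf' h
      simp only at h
      have hne : ∀ j, j ≠ i → f j = f' j := fun j hj => by
        simpa [hj] using congrFun h j
      have hgg : g f = g f' := by simpa using congrFun h i
      funext j
      by_cases hj : j = i
      · subst hj; exact hinj f hf f' hf' hne hgg
      · exact hne j hj
  have h2 : (Fintype.piFinset (fun j => if j = i then ball n q else ball n p)).card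
      * (ball n p).card = (ball n q).card * (ball n p).card ^ m := by
    rw [Fintype.card_piFinset, ← Finset.mul_prod_erase _ _ (Finset.mem_univ i)]
    rw [Finset.prod_congr rfl (g := fun _ => (ball n p).card)
      (fun j hj => by simp [Finset.ne_of_mem_erase hj])]
    simp only [if_true, Finset.prod_const, Finset.card_erase_of_mem (Finset.mem_univ i),
      Finset.card_univ, Fintype.card_fin, mul_assoc]
    rw [← pow_succ, Nat.sub_add_cancel (by have := i.2; omega)]
  calc _ ≤ _ := Nat.mul_le_mul_right _ h1
    _ = _ := h2

theorem sym_lemma {α : Type*} [DecidableEq α] (L : ℕ) (x : FreeGroup α) (hx : 2 * L ≤ x.norm)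
    (h : x.toWord.take L = x⁻¹.toWord.take L) :
    x = mk ((invRev (mk (x.toWord.drop L)).toWord).take L) * mk (x.toWord.drop L) := by
  have hr : IsReduced (x.toWord.drop L) :=
    isReduced_toWord.infix (List.drop_suffix L x.toWord).isInfix
  rw [toWord_mk, hr.reduce_eq, mul_mk]
  have : (invRev (x.toWord.drop L)).take L = x.toWord.take L := by
    rw [h, toWord_inv]
    conv_rhs => rw [← List.take_append_drop L x.toWord, invRev_append]
    rw [List.take_append_of_le_length]
    unfold FreeGroup.norm at hx
    simp; omega
  rw [this, List.take_append_drop, mk_toWord]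

theorem ev_inj {α G : Type*} [Group G] (f f' : α → G) (a : α × Bool) (h : ev f a = ev f' a) :
    f a.1 = f' a.1 := by
  rcases a with ⟨i, _ | _⟩ <;> simpa [ev] using h

theorem ev_congr {α G : Type*} [Group G] (f f' : α → G) (a : α × Bool) (h : f a.1 = f' a.1) :
    ev f a = ev f' a := by
  simp [ev, h]

noncomputable def box (m n p : ℕ) : Finset (Fin m → FreeGroup (Fin n)) :=
  Fintype.piFinset (fun _ => ball n p)

theorem mem_box {m n p : ℕ} {f : Fin m → FreeGroup (Fin n)} :
    f ∈ box m n p ↔ ∀ i, (f i).norm ≤ p := by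
  simp [box, mem_ball]

theorem card_box (m n p : ℕ) : (box m n p).card = (ball n p).card ^ m := by
  simp [box]

noncomputable def E1 (m n p L : ℕ) (i : Fin m) : Finset (Fin m → FreeGroup (Fin n)) :=
  (box m n p).filter (fun f => (f i).norm < 4 * L)

noncomputable def E2 (m n p L : ℕ) (ab : (Fin m × Bool) × (Fin m × Bool)) :
    Finset (Fin m → FreeGroup (Fin n)) :=
  (box m n p).filter (fun f => ab.1 ≠ ab.2 ∧ 4 * L ≤ (f ab.1.1).norm ∧
    (ev f ab.1).toWord.take L = (ev f ab.2).toWord.take L)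

theorem card_E1 (m n p L : ℕ) (hL : 5 * L ≤ p) (i : Fin m) :
    (E1 m n p L i).card * (ball n p).card ≤ (ball n (p - L)).card * (ball n p).card ^ m := by
  apply inj_count i _ _ (fun f => f i)
  · intro f hf
    simp only [E1, Finset.mem_filter] at hf
    show (f i).norm ≤ _
    omega
  · intro f _ f' _ _ h
    exact h
  · intro f hf
    simp only [E1, Finset.mem_filter] at hf
    exact mem_box.1 hf.1

theorem card_E2 (m n p L : ℕ) (ab : (Fin m × Bool) × (Fin m × Bool)) :
    (E2 m n p L ab).card * (ball n p).card ≤ (ball n (p - L)).card * (ball n p).card ^ m := by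
  obtain ⟨a, b⟩ := ab
  apply inj_count b.1 _ _ (fun f => mk ((ev f b).toWord.drop L))
  · intro f hf
    simp only [E2, Finset.mem_filter] at hf
    refine norm_mk_le.trans ?_
    have h1 := mem_box.1 hf.1 b.1
    rw [← norm_ev f b] at h1
    unfold FreeGroup.norm at h1
    rw [List.length_drop]
    omega
  · intro f hf f' hf' hne hg
    simp only [E2, Finset.mem_filter] at hf hf'
    apply ev_inj f f' b
    by_cases hab : a.1 = b.1
    · have key : ∀ f : Fin m → FreeGroup (Fin n), 4 * L ≤ (f a.1).norm →
          (ev f a).toWord.take L = (ev f b).toWord.take L →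
          ev f b = mk ((invRev (mk ((ev f b).toWord.drop L)).toWord).take L) *
            mk ((ev f b).toWord.drop L) := by
        intro f h1 h2
        apply sym_lemma
        · rw [norm_ev, ← hab]; omega
        · rw [← h2, ev_inv]
          congr 3
          ext
          · simp [hab]
          · have : a.2 ≠ b.2 := fun h => hf.2.1 (Prod.ext hab h)
            cases h : a.2 <;> cases h' : b.2 <;> simp_all
      rw [key f hf.2.2.1 hf.2.2.2, key f' hf'.2.2.1 hf'.2.2.2]
      rw [hg]
    · have key : ∀ f : Fin m → FreeGroup (Fin n),
          (ev f a).toWord.take L = (ev f b).toWord.take L →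
          ev f b = mk ((ev f a).toWord.take L) * mk ((ev f b).toWord.drop L) := by
        intro f h2
        rw [h2, mul_mk, List.take_append_drop, mk_toWord]
      rw [key f hf.2.2.2, key f' hf'.2.2.2, ev_congr f f' a (hne a.1 hab)]
      rw [hg]
  · intro f hf
    simp only [E2, Finset.mem_filter] at hf
    exact mem_box.1 hf.1

noncomputable def big (m n p : ℕ) :
    Finset ((Fin m → FreeGroup (Fin n)) × FreeGroup (Fin n) × FreeGroup (Fin n)) :=
  box m n p ×ˢ ball n p ×ˢ ball n p

theorem card_big (m n p : ℕ) : (big m n p).card = (ball n p).card ^ (m + 2) := by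
  simp [big, card_box]; ring

theorem one_le_ball (n p : ℕ) : 1 ≤ (ball n p).card :=
  Finset.card_pos.2 ⟨1, by simp [mem_ball]⟩

def IsBad {m n : ℕ} (ψ : FreeGroup (Fin m) →* FreeGroup (Fin n))
    (x : (Fin m → FreeGroup (Fin n)) × FreeGroup (Fin n) × FreeGroup (Fin n)) : Prop :=
  ∃ z : FreeGroup (Fin m), x.2.1 = FreeGroup.lift x.1 z * x.2.2 * (ψ z)⁻¹

open Classical in
noncomputable def bad {m n : ℕ} (ψ : FreeGroup (Fin m) →* FreeGroup (Fin n)) (p : ℕ) :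
    Finset ((Fin m → FreeGroup (Fin n)) × FreeGroup (Fin n) × FreeGroup (Fin n)) :=
  (big m n p).filter (IsBad ψ)

noncomputable def Zs {m n : ℕ} (ψ : FreeGroup (Fin m) →* FreeGroup (Fin n)) (p : ℕ)
    (z : FreeGroup (Fin m)) :
    Finset ((Fin m → FreeGroup (Fin n)) × FreeGroup (Fin n) × FreeGroup (Fin n)) :=
  (big m n p).filter (fun x => x.2.1 = FreeGroup.lift x.1 z * x.2.2 * (ψ z)⁻¹)

theorem card_Zs {m n : ℕ} (ψ : FreeGroup (Fin m) →* FreeGroup (Fin n)) (p q : ℕ)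
    (z : FreeGroup (Fin m)) :
    (Zs ψ p z).card * (ball n p).card ≤ (ball n q).card * (ball n p).card ^ (m + 2) := by
  have h1 : (Zs ψ p z).card ≤ (box m n p ×ˢ ball n p).card := by
    apply Finset.card_le_card_of_injOn (fun x => (x.1, x.2.2))
    · intro x hx
      simp only [Zs, big, Finset.mem_coe, Finset.mem_filter, Finset.mem_product] at hx ⊢
      exact ⟨hx.1.1, hx.1.2.2⟩
    · intro x hx y hy h
      simp only [Zs, Finset.mem_coe, Finset.mem_filter, Prod.mk.injEq] at hx hy h
      refine Prod.ext h.1 (Prod.ext ?_ h.2)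
      rw [hx.2, hy.2, h.1, h.2]
  rw [Finset.card_product, card_box] at h1
  have h2 := one_le_ball n q
  calc _ ≤ ((ball n p).card ^ m * (ball n p).card) * (ball n p).card := Nat.mul_le_mul_right _ h1
    _ = 1 * (ball n p).card ^ (m + 2) := by ring
    _ ≤ _ := Nat.mul_le_mul_right _ h2

theorem bad_sub {m n : ℕ} (ψ : FreeGroup (Fin m) →* FreeGroup (Fin n)) (C : ℕ)
    (hC : ∀ z, (ψ z).norm ≤ C * z.norm) (p L : ℕ) (hL : p ≤ 10 * L + 9) (hL1 : 1 ≤ L)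
    (hLC : C ≤ L) :
    bad ψ p ⊆ (Finset.univ.biUnion (fun i => E1 m n p L i ×ˢ ball n p ×ˢ ball n p)) ∪
      (Finset.univ.biUnion (fun ab => E2 m n p L ab ×ˢ ball n p ×ˢ ball n p)) ∪
      (ball m 38).biUnion (Zs ψ p) := by
  rintro ⟨f, u, v⟩ hx
  simp only [bad, Finset.mem_filter] at hx
  obtain ⟨hb, z, hz⟩ := hx
  have hb' := hb
  simp only [big, Finset.mem_product] at hb
  by_cases h1 : ∃ i, (f i).norm < 4 * L
  · obtain ⟨i, hi⟩ := h1
    apply Finset.mem_union_left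
    apply Finset.mem_union_left
    simp only [Finset.mem_biUnion, Finset.mem_univ, true_and, Finset.mem_product, E1,
      Finset.mem_filter]
    exact ⟨i, ⟨hb.1, hi⟩, hb.2⟩
  push Not at h1
  by_cases h2 : ∃ a b, a ≠ b ∧ (ev f a).toWord.take L = (ev f b).toWord.take L
  · obtain ⟨a, b, hab, h⟩ := h2
    apply Finset.mem_union_left
    apply Finset.mem_union_right
    simp only [Finset.mem_biUnion, Finset.mem_univ, true_and, Finset.mem_product, E2,
      Finset.mem_filter]
    exact ⟨(a, b), ⟨hb.1, hab, h1 _, h⟩, hb.2⟩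
  push Not at h2
  apply Finset.mem_union_right
  simp only [Finset.mem_biUnion, Zs, Finset.mem_filter]
  refine ⟨z, ?_, hb', hz⟩
  rw [mem_ball]
  have h3 := long' L f h1 h2 z
  simp only at hz
  have h4 : lift f z = u * ψ z * v⁻¹ := by rw [hz]; group
  have h5 : (lift f z).norm ≤ u.norm + (ψ z).norm + v.norm := by
    rw [h4]
    have e1 := norm_mul_le (u * ψ z) v⁻¹
    have e2 := norm_mul_le u (ψ z)
    rw [norm_inv_eq] at e1
    omega
  have h6 := mem_ball.1 hb.2.1
  have h7 := mem_ball.1 hb.2.2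
  have h8 := hC z
  have h9 : C * z.norm ≤ L * z.norm := Nat.mul_le_mul_right _ hLC
  have h10 : L * z.norm ≤ L * 38 := by nlinarith
  exact Nat.le_of_mul_le_mul_left h10 hL1

theorem card_bad {m n : ℕ} (ψ : FreeGroup (Fin m) →* FreeGroup (Fin n)) :
    ∃ K p0 : ℕ, ∀ p, p0 ≤ p → (bad ψ p).card * (ball n p).card ≤
      K * ((ball n (p - p / 10)).card * (ball n p).card ^ (m + 2)) := by
  obtain ⟨C, hC⟩ := hom_bound ψ
  refine ⟨m + Fintype.card ((Fin m × Bool) × (Fin m × Bool)) + (ball m 38).card,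
    10 * (C + 1), fun p hp => ?_⟩
  have hs := Finset.card_le_card (bad_sub ψ C hC p (p / 10) (by omega) (by omega) (by omega))
  have hs2 := hs.trans (Finset.card_union_le _ _)
  have hs3 := hs2.trans (Nat.add_le_add_right (Finset.card_union_le _ _) _)
  have hs4 := hs3.trans (Nat.add_le_add (Nat.add_le_add Finset.card_biUnion_le
    Finset.card_biUnion_le) Finset.card_biUnion_le)
  have hE : ∀ E : Finset (Fin m → FreeGroup (Fin n)),
      E.card * (ball n p).card ≤ (ball n (p - p / 10)).card * (ball n p).card ^ m →
      (E ×ˢ ball n p ×ˢ ball n p).card * (ball n p).card ≤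
        (ball n (p - p / 10)).card * (ball n p).card ^ (m + 2) := by
    intro E h
    simp only [Finset.card_product]
    calc _ = (E.card * (ball n p).card) * (ball n p).card ^ 2 := by ring
      _ ≤ _ := Nat.mul_le_mul_right _ h
      _ = _ := by ring
  refine (Nat.mul_le_mul_right _ hs4).trans ?_
  rw [add_mul, add_mul, add_mul, add_mul, Finset.sum_mul, Finset.sum_mul, Finset.sum_mul]
  refine Nat.add_le_add (Nat.add_le_add ?_ ?_) ?_
  · refine (Finset.sum_le_card_nsmul _ _ _
      (fun i _ => hE _ (card_E1 m n p (p / 10) (by omega) i))).trans ?_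
    simp
  · refine (Finset.sum_le_card_nsmul _ _ _
      (fun i _ => hE _ (card_E2 m n p (p / 10) i))).trans ?_
    simp
  · refine (Finset.sum_le_card_nsmul _ _ _
      (fun i _ => card_Zs ψ p (p - p / 10) i)).trans ?_
    simp

theorem ratio_bound {m n : ℕ} (hn : 1 < n) (ψ : FreeGroup (Fin m) →* FreeGroup (Fin n)) :
    ∃ K p0 : ℕ, ∀ p, p0 ≤ p → ((bad ψ p).card : ℝ) / ((ball n p).card : ℝ) ^ (m + 2) ≤
      K * (1 / 2 : ℝ) ^ (p / 10) := by
  obtain ⟨K, p0, h⟩ := card_bad ψ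
  refine ⟨K, p0, fun p hp => ?_⟩
  have h1 := h p hp
  have h2 := ball_pow hn (p - p / 10) (p / 10)
  rw [Nat.sub_add_cancel (by omega)] at h2
  have hN : (0 : ℝ) < (ball n p).card := by exact_mod_cast one_le_ball n p
  have h1' : ((bad ψ p).card : ℝ) * (ball n p).card ≤
      K * ((ball n (p - p / 10)).card * ((ball n p).card : ℝ) ^ (m + 2)) := by exact_mod_cast h1
  have h2' : (2 : ℝ) ^ (p / 10) * (ball n (p - p / 10)).card ≤ (ball n p).card := by
    exact_mod_cast h2
  have hP : (0 : ℝ) < ((ball n p).card : ℝ) ^ (m + 2) := by positivity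
  have h3 : ((ball n (p - p / 10)).card : ℝ) ≤ (1 / 2 : ℝ) ^ (p / 10) * (ball n p).card := by
    rw [one_div, inv_pow, ← div_eq_inv_mul, le_div_iff₀ (by positivity)]
    linarith
  rw [div_le_iff₀ hP]
  refine le_of_mul_le_mul_right ?_ hN
  calc _ ≤ _ := h1'
    _ ≤ K * (((1 / 2 : ℝ) ^ (p / 10) * (ball n p).card) * ((ball n p).card : ℝ) ^ (m + 2)) := by
      gcongr
    _ = _ := by ring

theorem card_good {m n : ℕ} (ψ : FreeGroup (Fin m) →* FreeGroup (Fin n)) (p : ℕ) :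
    Nat.card {x : (Fin m → FreeGroup (Fin n)) × FreeGroup (Fin n) × FreeGroup (Fin n) //
          (¬ ∃ z : FreeGroup (Fin m), x.2.1 = FreeGroup.lift x.1 z * x.2.2 * (ψ z)⁻¹) ∧
          (∀ i, FreeGroup.norm (x.1 i) ≤ p) ∧
          FreeGroup.norm x.2.1 ≤ p ∧ FreeGroup.norm x.2.2 ≤ p} + (bad ψ p).card
      = (ball n p).card ^ (m + 2) := by
  classical
  rw [← card_big, ← Finset.card_filter_add_card_filter_not (s := big m n p) (IsBad ψ), add_comm]
  congr 1
  rw [← Nat.card_eq_finsetCard]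
  refine Nat.card_congr (Equiv.subtypeEquivRight fun x => ?_)
  rw [Finset.mem_filter, big, Finset.mem_product, Finset.mem_product, mem_box, mem_ball, mem_ball]
  unfold IsBad
  tauto

end GenAux

/-- Let `G` be the free group on `m` generators, `H` the free group of
rank `n > 1`, and `ψ : G → H` any homomorphism. Then the set of triples
`(φ, u, v) ∈ H^m × H × H` (with `φ` identified with the homomorphism sending the `i`-th
generator to its `i`-th coordinate) such that there is no `z ∈ G` with
`u = φ(z) * v * ψ(z)⁻¹` is generic: its asymptotic density in `H^{m+2}` is `1`. -/
theorem generic_not_doubly_twisted_conjugate {m n : ℕ} (hn : 1 < n)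
    (ψ : FreeGroup (Fin m) →* FreeGroup (Fin n)) :
    Filter.Tendsto (fun p : ℕ =>
      (Nat.card {x : (Fin m → FreeGroup (Fin n)) × FreeGroup (Fin n) × FreeGroup (Fin n) //
          (¬ ∃ z : FreeGroup (Fin m), x.2.1 = FreeGroup.lift x.1 z * x.2.2 * (ψ z)⁻¹) ∧
          (∀ i, FreeGroup.norm (x.1 i) ≤ p) ∧
          FreeGroup.norm x.2.1 ≤ p ∧ FreeGroup.norm x.2.2 ≤ p} : ℝ) /
        (ballCount n p : ℝ) ^ (m + 2))
      Filter.atTop (nhds 1) := by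
  obtain ⟨K, p0, hK⟩ := GenAux.ratio_bound hn ψ
  have h0 : Filter.Tendsto (fun p : ℕ => ((GenAux.bad ψ p).card : ℝ) /
      ((GenAux.ball n p).card : ℝ) ^ (m + 2)) Filter.atTop (nhds 0) := by
    have hlim : Filter.Tendsto (fun p : ℕ => (K : ℝ) * (1 / 2 : ℝ) ^ (p / 10))
        Filter.atTop (nhds 0) := by
      have h1 := (tendsto_pow_atTop_nhds_zero_of_lt_one (r := (1 / 2 : ℝ)) (by norm_num)
        (by norm_num)).comp (Nat.tendsto_div_const_atTop (n := 10) (by norm_num))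
      simpa using h1.const_mul (K : ℝ)
    refine tendsto_of_tendsto_of_tendsto_of_le_of_le' tendsto_const_nhds hlim ?_ ?_
    · exact Filter.Eventually.of_forall fun p => by positivity
    · filter_upwards [Filter.eventually_ge_atTop p0] with p hp using hK p hp
  have h1 := h0.const_sub 1
  rw [sub_zero] at h1
  refine h1.congr fun p => ?_
  rw [GenAux.ballCount_eq]
  have hg := GenAux.card_good ψ p
  have hN : (0 : ℝ) < (GenAux.ball n p).card := by exact_mod_cast GenAux.one_le_ball n p
  have hP : (0 : ℝ) < ((GenAux.ball n p).card : ℝ) ^ (m + 2) := by positivity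
  rw [eq_div_iff hP.ne', sub_mul, div_mul_cancel₀ _ hP.ne', one_mul, sub_eq_iff_eq_add]
  exact_mod_cast hg.symm
end

section
/- Let G be a free group of rank n greater than 1, with generators a_1,…,a_n. Then the set of triples (φ, u, v) ∈ G^n × G × G (where φ is identified with the endomorphism of G sending a_i to its i-th coordinate) such that there is no z ∈ G with u = φ(z)·v·z⁻¹ is generic: its asymptotic density in G^{n+2} equals 1. -/
theorem exists_commonPrefix {β : Type*} (u v : List β) :
    ∃ c u' v', u = c ++ u' ∧ v = c ++ v' ∧ ∀ a ∈ u'.head?, ∀ b ∈ v'.head?, a ≠ b := by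
  induction u generalizing v with
  | nil => exact ⟨[], [], v, by simp⟩
  | cons a u ih =>
    cases v with
    | nil => exact ⟨[], a :: u, [], by simp⟩
    | cons b v =>
      by_cases h : a = b
      · obtain ⟨c, u', v', h1, h2, h3⟩ := ih v
        exact ⟨a :: c, u', v', by simp [h1], by simp [h, h2], h3⟩
      · exact ⟨[], a :: u, b :: v, by simp, by simp, by simpa using h⟩

theorem mul_take {n : ℕ} (L : ℕ) (g h : FreeGroup (Fin n))
    (hne : (g⁻¹).toWord.take L ≠ h.toWord.take L) (hg : 2 * L ≤ g.norm) :
    g.norm + h.norm ≤ (g * h).norm + 2 * L ∧ (g * h).toWord.take L = g.toWord.take L := by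
  obtain ⟨c, u, v, h1, h2, h3⟩ := exists_commonPrefix (g⁻¹).toWord h.toWord
  have hc : c.length < L := by
    by_contra hcl
    push Not at hcl
    apply hne
    rw [h1, h2, List.take_append_of_le_length hcl, List.take_append_of_le_length hcl]
  have hgw : g.toWord = FreeGroup.invRev u ++ FreeGroup.invRev c := by
    rw [← FreeGroup.invRev_append, ← h1, FreeGroup.toWord_inv, FreeGroup.invRev_invRev]
  have hgr : FreeGroup.IsReduced g.toWord := FreeGroup.isReduced_toWord
  have hhr : FreeGroup.IsReduced h.toWord := FreeGroup.isReduced_toWord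
  rw [hgw] at hgr
  rw [h2] at hhr
  have hred : FreeGroup.IsReduced (FreeGroup.invRev u ++ v) := by
    refine List.IsChain.append hgr.left_of_append hhr.right_of_append ?_
    intro a ha b hb
    cases u with
    | nil => simp at ha
    | cons x u =>
      have h4 := h3 x (by simp) b hb
      simp [FreeGroup.invRev] at ha
      subst ha
      intro h5
      by_contra h6
      apply h4
      simp only at h5 h6
      ext
      · simp [h5]
      · revert h6
        cases x.2 <;> cases b.2 <;> simp
  have hmul : (g * h).toWord = FreeGroup.invRev u ++ v := by
    have : g * h = FreeGroup.mk (FreeGroup.invRev u ++ v) := by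
      rw [← FreeGroup.mk_toWord (x := g), ← FreeGroup.mk_toWord (x := h), hgw, h2,
        ← FreeGroup.mul_mk, ← FreeGroup.mul_mk, ← FreeGroup.mul_mk, ← FreeGroup.inv_mk,
        ← FreeGroup.inv_mk]
      group
    rw [this, FreeGroup.toWord_mk, hred.reduce_eq]
  have e1 : g.norm = u.length + c.length := by simp [FreeGroup.norm, hgw]
  have e2 : h.norm = c.length + v.length := by simp [FreeGroup.norm, h2]
  have e3 : (g * h).norm = u.length + v.length := by simp [FreeGroup.norm, hmul]
  refine ⟨by omega, ?_⟩
  rw [hmul, hgw, List.take_append_of_le_length (by simp; omega),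
    List.take_append_of_le_length (by simp; omega)]

/-- Image of a signed letter. -/
def lett {n : ℕ} (φ : Fin n → FreeGroup (Fin n)) (x : Fin n × Bool) : FreeGroup (Fin n) :=
  if x.2 then φ x.1 else (φ x.1)⁻¹

theorem lett_inv {n : ℕ} (φ : Fin n → FreeGroup (Fin n)) (x : Fin n × Bool) :
    (lett φ x)⁻¹ = lett φ (x.1, !x.2) := by
  rcases x with ⟨i, b⟩
  cases b <;> simp [lett]

theorem norm_lett {n : ℕ} (φ : Fin n → FreeGroup (Fin n)) (x : Fin n × Bool) :
    (lett φ x).norm = (φ x.1).norm := by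
  rcases x with ⟨i, b⟩
  cases b <;> simp [lett]

theorem lift_cons {n : ℕ} (φ : Fin n → FreeGroup (Fin n)) (x : Fin n × Bool)
    (l : List (Fin n × Bool)) :
    FreeGroup.lift φ (FreeGroup.mk (x :: l)) = lett φ x * FreeGroup.lift φ (FreeGroup.mk l) := by
  rcases x with ⟨i, b⟩
  cases b <;> simp [lett]

theorem growth_aux {n : ℕ} (L : ℕ) (φ : Fin n → FreeGroup (Fin n))
    (h1 : ∀ i, 2 * L + 6 ≤ (φ i).norm)
    (h2 : ∀ x y, x ≠ y → (lett φ x).toWord.take L ≠ (lett φ y).toWord.take L)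
    (l : List (Fin n × Bool)) : ∀ x, FreeGroup.IsReduced (x :: l) →
      6 * (l.length + 1) + L ≤ (FreeGroup.lift φ (FreeGroup.mk (x :: l))).norm ∧
      (FreeGroup.lift φ (FreeGroup.mk (x :: l))).toWord.take L = (lett φ x).toWord.take L := by
  induction l with
  | nil =>
    intro x _
    have h := h1 x.1
    rw [← norm_lett φ x] at h
    rw [lift_cons]
    have : FreeGroup.lift φ (FreeGroup.mk []) = 1 := by simp
    rw [this, mul_one]
    simp only [List.length_nil, and_true]
    omega
  | cons y l ih =>
    intro x hx
    rw [FreeGroup.isReduced_cons_cons] at hx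
    obtain ⟨i1, i2⟩ := ih y hx.2
    rw [lift_cons]
    have hnx := h1 x.1
    rw [← norm_lett φ x] at hnx
    have := mul_take L (lett φ x) (FreeGroup.lift φ (FreeGroup.mk (y :: l))) (by
      rw [i2, lett_inv]
      apply h2
      intro h
      subst h
      have := hx.1 rfl
      simp at this) (by omega)
    refine ⟨?_, this.2⟩
    simp only [List.length_cons]
    omega

theorem growth {n : ℕ} (L : ℕ) (φ : Fin n → FreeGroup (Fin n))
    (h1 : ∀ i, 2 * L + 6 ≤ (φ i).norm)
    (h2 : ∀ x y, x ≠ y → (lett φ x).toWord.take L ≠ (lett φ y).toWord.take L)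
    (z : FreeGroup (Fin n)) : 6 * z.norm ≤ (FreeGroup.lift φ z).norm := by
  rcases hz : z.toWord with _ | ⟨x, l⟩
  · simp [FreeGroup.norm, hz]
  · have hr : FreeGroup.IsReduced z.toWord := FreeGroup.isReduced_toWord
    rw [hz] at hr
    have := (growth_aux L φ h1 h2 l x hr).1
    rw [← hz, FreeGroup.mk_toWord] at this
    have e : z.norm = l.length + 1 := by simp [FreeGroup.norm, hz]
    omega

/-- Finite ball. -/
theorem ball_finite (n p : ℕ) : {w : FreeGroup (Fin n) | w.norm ≤ p}.Finite := by
  refine Set.Finite.of_finite_image (f := FreeGroup.toWord) ?_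
    FreeGroup.toWord_injective.injOn
  refine (List.finite_length_le (Fin n × Bool) p).subset ?_
  rintro _ ⟨w, hw, rfl⟩
  exact hw

/-- Ball as a finset. -/
noncomputable def HH (n p : ℕ) : Finset (FreeGroup (Fin n)) := (ball_finite n p).toFinset

theorem mem_HH {n p : ℕ} {w : FreeGroup (Fin n)} : w ∈ HH n p ↔ w.norm ≤ p := by
  simp [HH]

theorem HH_double {n : ℕ} (hn : 1 < n) (q : ℕ) : 2 * (HH n q).card ≤ (HH n (q + 1)).card := by
  classical
  let s : FreeGroup (Fin n) → Bool := fun w => (w.toWord.getLast?.map Prod.snd).getD true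
  let f : FreeGroup (Fin n) × Fin n → FreeGroup (Fin n) := fun x =>
    FreeGroup.mk (x.1.toWord ++ [(x.2, s x.1)])
  have hf : ∀ x, (f x).toWord = x.1.toWord ++ [(x.2, s x.1)] := by
    intro x
    have hr : FreeGroup.IsReduced (x.1.toWord ++ [(x.2, s x.1)]) := by
      refine List.IsChain.append FreeGroup.isReduced_toWord (by simp) ?_
      intro a ha b hb
      simp at hb
      subst hb
      intro _
      have ha' : x.1.toWord.getLast? = some a := ha
      simp [s, ha']
    rw [FreeGroup.toWord_mk, hr.reduce_eq]
  have hc : (HH n q ×ˢ (Finset.univ : Finset (Fin n))).card ≤ (HH n (q + 1)).card := by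
    refine Finset.card_le_card_of_injOn f ?_ ?_
    · intro x hx
      simp only [Finset.coe_product, Set.mem_prod, Finset.mem_coe, mem_HH] at hx ⊢
      have := hx.1
      simp only [FreeGroup.norm] at this ⊢
      rw [hf]
      simpa using this
    · intro x _ y _ hxy
      have h := congrArg FreeGroup.toWord hxy
      rw [hf, hf] at h
      obtain ⟨h3, h4⟩ := List.append_inj' h rfl
      simp at h4
      exact Prod.ext (FreeGroup.toWord_injective h3) h4.1
  rw [Finset.card_product, Finset.card_univ, Fintype.card_fin] at hc
  nlinarith

theorem HH_pow {n : ℕ} (hn : 1 < n) (q L : ℕ) : 2 ^ L * (HH n q).card ≤ (HH n (q + L)).card := by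
  induction L with
  | zero => simp
  | succ L ih =>
    have := HH_double hn (q + L)
    rw [pow_succ, ← add_assoc]
    linarith

theorem cover_card {n p q : ℕ} (S : Finset (Fin n → FreeGroup (Fin n))) (i : Fin n)
    (r : (Fin n → FreeGroup (Fin n)) → FreeGroup (Fin n))
    (hS : ∀ φ ∈ S, (∀ j, (φ j).norm ≤ p) ∧
      ∃ g : FreeGroup (Fin n), g.norm ≤ q ∧ φ i = r (Function.update φ i g)) :
    S.card ≤ (HH n p).card ^ (n - 1) * (HH n q).card := by
  classical
  let T : Finset (Fin n → FreeGroup (Fin n)) :=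
    Fintype.piFinset (Function.update (fun _ => HH n p) i (HH n q))
  have hT : T.card = (HH n p).card ^ (n - 1) * (HH n q).card := by
    simp only [T, Fintype.card_piFinset]
    rw [← Finset.mul_prod_erase Finset.univ _ (Finset.mem_univ i), mul_comm]
    congr 1
    · rw [Finset.prod_congr rfl (g := fun _ => (HH n p).card)]
      · simp
      · intro j hj
        rw [Function.update_of_ne (Finset.ne_of_mem_erase hj)]
    · simp
  rw [← hT]
  have : S ⊆ T.image (fun ψ => Function.update ψ i (r ψ)) := by
    intro φ hφ
    obtain ⟨h1, g, h2, h3⟩ := hS φ hφ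
    refine Finset.mem_image.2 ⟨Function.update φ i g, ?_, ?_⟩
    · refine Fintype.mem_piFinset.2 fun j => ?_
      by_cases hj : j = i
      · subst hj
        simpa [mem_HH] using h2
      · simpa [hj, mem_HH] using h1 j
    · rw [← h3]
      simp
  exact (Finset.card_le_card this).trans Finset.card_image_le

/-- the prefix element -/
def tk {n : ℕ} (L : ℕ) (g : FreeGroup (Fin n)) : FreeGroup (Fin n) :=
  FreeGroup.mk (g.toWord.take L)

/-- the suffix element -/
def dp {n : ℕ} (L : ℕ) (g : FreeGroup (Fin n)) : FreeGroup (Fin n) :=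
  FreeGroup.mk (g.toWord.drop L)

theorem tk_mul_dp {n : ℕ} (L : ℕ) (g : FreeGroup (Fin n)) : tk L g * dp L g = g := by
  simp only [tk, dp, FreeGroup.mul_mk, List.take_append_drop]
  exact FreeGroup.mk_toWord

theorem toWord_dp {n : ℕ} (L : ℕ) (g : FreeGroup (Fin n)) :
    (dp L g).toWord = g.toWord.drop L := by
  rw [dp, FreeGroup.toWord_mk]
  exact (FreeGroup.isReduced_toWord.infix (List.drop_suffix _ _).isInfix).reduce_eq

theorem norm_dp {n : ℕ} (L : ℕ) (g : FreeGroup (Fin n)) : (dp L g).norm = g.norm - L := by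
  simp [FreeGroup.norm, toWord_dp]

/-- signed power -/
def sg {n : ℕ} (b : Bool) (g : FreeGroup (Fin n)) : FreeGroup (Fin n) := if b then g else g⁻¹

theorem sg_sg {n : ℕ} (b : Bool) (g : FreeGroup (Fin n)) : sg b (sg b g) = g := by
  cases b <;> simp [sg]

theorem norm_sg {n : ℕ} (b : Bool) (g : FreeGroup (Fin n)) : (sg b g).norm = g.norm := by
  cases b <;> simp [sg]

theorem bad_pair {n p L : ℕ} (S : Finset (Fin n → FreeGroup (Fin n))) (x y : Fin n × Bool)
    (hxy : x ≠ y)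
    (hS : ∀ φ ∈ S, (∀ j, (φ j).norm ≤ p) ∧ (∀ j, 2 * L ≤ (φ j).norm) ∧
      (lett φ x).toWord.take L = (lett φ y).toWord.take L) :
    S.card ≤ (HH n p).card ^ (n - 1) * (HH n (p - L)).card := by
  by_cases hij : x.1 = y.1
  · have hS' : ∀ φ ∈ S, (φ x.1).toWord.take L = ((φ x.1)⁻¹).toWord.take L := by
      intro φ hφ
      have := (hS φ hφ).2.2
      rcases x with ⟨i, b⟩
      rcases y with ⟨j, c⟩
      simp only at hij
      subst hij
      cases b <;> cases c <;> simp [lett] at this hxy ⊢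
      · exact this.symm
      · exact this
    refine cover_card S x.1 (fun ψ => tk L (ψ x.1)⁻¹ * ψ x.1) ?_
    intro φ hφ
    obtain ⟨h1, h2, -⟩ := hS φ hφ
    refine ⟨h1, dp L (φ x.1), ?_, ?_⟩
    · rw [norm_dp]
      have := h1 x.1
      omega
    · simp only [Function.update_self]
      have : tk L (dp L (φ x.1))⁻¹ = tk L (φ x.1) := by
        unfold tk
        rw [hS' φ hφ, FreeGroup.toWord_inv, FreeGroup.toWord_inv, toWord_dp]
        congr 1
        conv_rhs => rw [← List.take_append_drop L (φ x.1).toWord, FreeGroup.invRev_append]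
        rw [List.take_append_of_le_length]
        have := h2 x.1
        simp only [FreeGroup.norm] at this
        simp
        omega
      rw [this, tk_mul_dp]
  · refine cover_card S x.1 (fun ψ => sg x.2 (tk L (lett ψ y) * sg x.2 (ψ x.1))) ?_
    intro φ hφ
    obtain ⟨h1, h2, h3⟩ := hS φ hφ
    refine ⟨h1, sg x.2 (dp L (lett φ x)), ?_, ?_⟩
    · rw [norm_sg, norm_dp, norm_lett]
      have := h1 x.1
      omega
    · simp only [Function.update_self]
      have e : lett (Function.update φ x.1 (sg x.2 (dp L (lett φ x)))) y = lett φ y := by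
        simp only [lett]
        rw [Function.update_of_ne (Ne.symm hij)]
      rw [e, sg_sg]
      have : tk L (lett φ y) = tk L (lett φ x) := by simp [tk, h3]
      rw [this, tk_mul_dp]
      exact (sg_sg x.2 (φ x.1)).symm

/-- The bad set is small. -/
theorem bad_card {n p : ℕ} (hn : 1 < n) (hp : 20 ≤ p)
    (S : Finset ((Fin n → FreeGroup (Fin n)) × FreeGroup (Fin n) × FreeGroup (Fin n)))
    (hS : ∀ x ∈ S, (∃ z : FreeGroup (Fin n), x.2.1 = FreeGroup.lift x.1 z * x.2.2 * z⁻¹) ∧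
          (∀ i, FreeGroup.norm (x.1 i) ≤ p) ∧
          FreeGroup.norm x.2.1 ≤ p ∧ FreeGroup.norm x.2.2 ≤ p) :
    S.card ≤ (n + (2 * n) * (2 * n) + 1) *
      ((HH n p).card ^ (n + 1) * (HH n (p - p / 4)).card) := by
  classical
  set L := p / 4 with hL
  let Φ : Finset (Fin n → FreeGroup (Fin n)) := Fintype.piFinset fun _ => HH n p
  have hΦ : ∀ φ, φ ∈ Φ ↔ ∀ i, (φ i).norm ≤ p := by
    intro φ
    simp [Φ, Fintype.mem_piFinset, mem_HH]
  have hΦc : Φ.card = (HH n p).card ^ n := by simp [Φ, Fintype.card_piFinset]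
  let A : Fin n → Finset (Fin n → FreeGroup (Fin n)) := fun i =>
    Φ.filter fun φ => (φ i).norm < 2 * L + 6
  let F : (Fin n × Bool) × (Fin n × Bool) → Finset (Fin n → FreeGroup (Fin n)) := fun xy =>
    Φ.filter fun φ => xy.1 ≠ xy.2 ∧ (∀ j, 2 * L ≤ (φ j).norm) ∧
      (lett φ xy.1).toWord.take L = (lett φ xy.2).toWord.take L
  have hA : ∀ i, (A i).card ≤ (HH n p).card ^ (n - 1) * (HH n (p - L)).card := by
    intro i
    refine cover_card (A i) i (fun ψ => ψ i) ?_
    intro φ hφ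
    obtain ⟨h1, h2⟩ := Finset.mem_filter.1 hφ
    refine ⟨(hΦ φ).1 h1, φ i, by omega, by simp⟩
  have hF : ∀ xy, (F xy).card ≤ (HH n p).card ^ (n - 1) * (HH n (p - L)).card := by
    intro xy
    by_cases h : xy.1 = xy.2
    · have : F xy = ∅ := by
        simp [F, h]
      simp [this]
    · refine bad_pair (F xy) xy.1 xy.2 h ?_
      intro φ hφ
      obtain ⟨h1, -, h2, h3⟩ := Finset.mem_filter.1 hφ
      exact ⟨(hΦ φ).1 h1, h2, h3⟩
  let D : Finset (Fin n → FreeGroup (Fin n)) :=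
    Finset.univ.biUnion A ∪ Finset.univ.biUnion F
  have hD : D.card ≤ (n + (2 * n) * (2 * n)) *
      ((HH n p).card ^ (n - 1) * (HH n (p - L)).card) := by
    refine (Finset.card_union_le _ _).trans ?_
    rw [add_mul]
    refine add_le_add ?_ ?_
    · refine (Finset.card_biUnion_le_card_mul _ _ _ fun i _ => hA i).trans ?_
      simp
    · refine (Finset.card_biUnion_le_card_mul _ _ _ fun i _ => hF i).trans ?_
      simp [mul_comm]
  let G : Finset ((Fin n → FreeGroup (Fin n)) × FreeGroup (Fin n) × FreeGroup (Fin n)) :=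
    (Φ ×ˢ HH n p ×ˢ HH n (p - L)).image fun t =>
      (t.1, FreeGroup.lift t.1 t.2.2 * t.2.1 * t.2.2⁻¹, t.2.1)
  have hG : G.card ≤ (HH n p).card ^ (n + 1) * (HH n (p - L)).card := by
    refine Finset.card_image_le.trans (le_of_eq ?_)
    rw [Finset.card_product, Finset.card_product, hΦc]
    ring
  have hsub : S ⊆ (D ×ˢ HH n p ×ˢ HH n p) ∪ G := by
    intro x hx
    obtain ⟨⟨z, hz⟩, h1, h2, h3⟩ := hS x hx
    rw [Finset.mem_union]
    by_cases hxD : x.1 ∈ D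
    · left
      simp only [Finset.mem_product, mem_HH]
      exact ⟨hxD, h2, h3⟩
    · right
      have g1 : ∀ i, 2 * L + 6 ≤ (x.1 i).norm := by
        intro i
        by_contra hi
        push Not at hi
        apply hxD
        refine Finset.mem_union_left _ (Finset.mem_biUnion.2 ⟨i, Finset.mem_univ _, ?_⟩)
        exact Finset.mem_filter.2 ⟨(hΦ _).2 h1, hi⟩
      have g2 : ∀ a b, a ≠ b →
          (lett x.1 a).toWord.take L ≠ (lett x.1 b).toWord.take L := by
        intro a b hab he
        apply hxD
        refine Finset.mem_union_right _ (Finset.mem_biUnion.2 ⟨(a, b), Finset.mem_univ _, ?_⟩)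
        refine Finset.mem_filter.2 ⟨(hΦ _).2 h1, hab, fun j => ?_, he⟩
        have := g1 j
        omega
      have g3 := growth L x.1 g1 g2 z
      have g4 : FreeGroup.lift x.1 z = x.2.1 * z * x.2.2⁻¹ := by
        rw [hz]
        group
      have g5 := FreeGroup.norm_mul_le (x.2.1 * z) x.2.2⁻¹
      have g6 := FreeGroup.norm_mul_le x.2.1 z
      rw [FreeGroup.norm_inv_eq] at g5
      rw [g4] at g3
      refine Finset.mem_image.2 ⟨(x.1, x.2.2, z), ?_, ?_⟩
      · simp only [Finset.mem_product, mem_HH]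
        exact ⟨(hΦ _).2 h1, h3, by omega⟩
      · simp only
        rw [← hz]
  have hn1 : (HH n p).card ^ (n + 1) = (HH n p).card ^ (n - 1) * ((HH n p).card * (HH n p).card) := by
    rw [← sq, ← pow_add]
    congr 1
    omega
  calc S.card ≤ _ := Finset.card_le_card hsub
    _ ≤ _ := Finset.card_union_le _ _
    _ ≤ (n + (2 * n) * (2 * n)) * ((HH n p).card ^ (n - 1) * (HH n (p - L)).card)
          * ((HH n p).card * (HH n p).card) +
        (HH n p).card ^ (n + 1) * (HH n (p - L)).card := by
      refine add_le_add ?_ hG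
      rw [Finset.card_product, Finset.card_product]
      exact Nat.mul_le_mul_right _ hD
    _ = _ := by rw [hn1]; ring

theorem ballCount_eq (n p : ℕ) : ballCount n p = (HH n p).card := by
  unfold ballCount
  exact Nat.subtype_card (HH n p) fun x => mem_HH

/-- Let `G` be the free group of rank `n > 1`. The set of triples
`(φ, u, v) ∈ G^n × G × G` (with `φ` identified with the endomorphism sending the `i`-th
generator to its `i`-th coordinate) such that there is no `z ∈ G` with
`u = φ(z) * v * z⁻¹` is generic: its asymptotic density in `G^{n+2}` is `1`. -/
theorem generic_not_singly_twisted_conjugate {n : ℕ} (hn : 1 < n) :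
    Filter.Tendsto (fun p : ℕ =>
      (Nat.card {x : (Fin n → FreeGroup (Fin n)) × FreeGroup (Fin n) × FreeGroup (Fin n) //
          (¬ ∃ z : FreeGroup (Fin n), x.2.1 = FreeGroup.lift x.1 z * x.2.2 * z⁻¹) ∧
          (∀ i, FreeGroup.norm (x.1 i) ≤ p) ∧
          FreeGroup.norm x.2.1 ≤ p ∧ FreeGroup.norm x.2.2 ≤ p} : ℝ) /
        (ballCount n p : ℝ) ^ (n + 2))
      Filter.atTop (nhds 1) := by
  classical
  set K : ℝ := ((n + (2 * n) * (2 * n) + 1 : ℕ) : ℝ) with hK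
  have key : ∀ p : ℕ, 20 ≤ p → ∃ b : ℝ, 0 ≤ b ∧ b ≤ K * (1 / 2) ^ (p / 4) ∧
      (Nat.card {x : (Fin n → FreeGroup (Fin n)) × FreeGroup (Fin n) × FreeGroup (Fin n) //
          (¬ ∃ z : FreeGroup (Fin n), x.2.1 = FreeGroup.lift x.1 z * x.2.2 * z⁻¹) ∧
          (∀ i, FreeGroup.norm (x.1 i) ≤ p) ∧
          FreeGroup.norm x.2.1 ≤ p ∧ FreeGroup.norm x.2.2 ≤ p} : ℝ) /
        (ballCount n p : ℝ) ^ (n + 2) = 1 - b := by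
    intro p hp
    let Ω : Finset ((Fin n → FreeGroup (Fin n)) × FreeGroup (Fin n) × FreeGroup (Fin n)) :=
      (Fintype.piFinset fun _ => HH n p) ×ˢ HH n p ×ˢ HH n p
    have hΩ : ∀ x, x ∈ Ω ↔ (∀ i, FreeGroup.norm (x.1 i) ≤ p) ∧
          FreeGroup.norm x.2.1 ≤ p ∧ FreeGroup.norm x.2.2 ≤ p := by
      intro x
      simp [Ω, Finset.mem_product, Fintype.mem_piFinset, mem_HH]
    have hΩc : Ω.card = (HH n p).card ^ (n + 2) := by
      simp only [Ω, Finset.card_product, Fintype.card_piFinset, Finset.prod_const,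
        Finset.card_univ, Fintype.card_fin]
      ring
    let P : (Fin n → FreeGroup (Fin n)) × FreeGroup (Fin n) × FreeGroup (Fin n) → Prop :=
      fun x => ∃ z : FreeGroup (Fin n), x.2.1 = FreeGroup.lift x.1 z * x.2.2 * z⁻¹
    have hgood : Nat.card {x : (Fin n → FreeGroup (Fin n)) × FreeGroup (Fin n) × FreeGroup (Fin n) //
          (¬ ∃ z : FreeGroup (Fin n), x.2.1 = FreeGroup.lift x.1 z * x.2.2 * z⁻¹) ∧
          (∀ i, FreeGroup.norm (x.1 i) ≤ p) ∧
          FreeGroup.norm x.2.1 ≤ p ∧ FreeGroup.norm x.2.2 ≤ p} =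
        (Ω.filter fun x => ¬ P x).card := by
      refine Nat.subtype_card _ fun x => ?_
      rw [Finset.mem_filter, hΩ, and_comm]
    have hsum := Finset.card_filter_add_card_filter_not (s := Ω) P
    have hbad := bad_card hn hp (Ω.filter P) (by
      intro x hx
      obtain ⟨h1, h2⟩ := Finset.mem_filter.1 hx
      exact ⟨h2, (hΩ x).1 h1⟩)
    have hpow := HH_pow hn (p - p / 4) (p / 4)
    rw [Nat.sub_add_cancel (Nat.div_le_self p 4)] at hpow
    have hpos : 0 < (HH n p).card := Finset.card_pos.2 ⟨1, by simp [mem_HH]⟩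
    rw [hgood, ballCount_eq]
    set B : ℝ := ((HH n p).card : ℝ) with hB
    have hBpos : 0 < B := Nat.cast_pos.2 hpos
    have hsum' : ((Ω.filter P).card : ℝ) + ((Ω.filter fun x => ¬ P x).card : ℝ) = B ^ (n + 2) := by
      rw [hB, ← Nat.cast_add, hsum, hΩc, Nat.cast_pow]
    have hbad' : ((Ω.filter P).card : ℝ) ≤
        K * (B ^ (n + 1) * ((HH n (p - p / 4)).card : ℝ)) := by
      rw [hK, hB]
      exact_mod_cast hbad
    have hpow' : (2 : ℝ) ^ (p / 4) * ((HH n (p - p / 4)).card : ℝ) ≤ B := by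
      rw [hB]
      exact_mod_cast hpow
    have hK0 : 0 ≤ K := Nat.cast_nonneg _
    refine ⟨((Ω.filter P).card : ℝ) / B ^ (n + 2), by positivity, ?_, ?_⟩
    · rw [div_le_iff₀ (by positivity)]
      have h5 : ((HH n (p - p / 4)).card : ℝ) ≤ (1 / 2) ^ (p / 4) * B := by
        rw [one_div, inv_pow, ← div_eq_inv_mul, le_div_iff₀ (by positivity)]
        linarith
      calc ((Ω.filter P).card : ℝ) ≤ K * (B ^ (n + 1) * ((HH n (p - p / 4)).card : ℝ)) := hbad'
        _ ≤ K * (B ^ (n + 1) * ((1 / 2) ^ (p / 4) * B)) := by gcongr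
        _ = _ := by ring
    · rw [eq_sub_iff_add_eq, ← add_div, add_comm, hsum']
      exact div_self (by positivity)
  have hlim : Filter.Tendsto (fun p : ℕ => 1 - K * (1 / 2 : ℝ) ^ (p / 4)) Filter.atTop (nhds 1) := by
    have h1 : Filter.Tendsto (fun p : ℕ => (1 / 2 : ℝ) ^ (p / 4)) Filter.atTop (nhds 0) :=
      (tendsto_pow_atTop_nhds_zero_of_lt_one (by norm_num) (by norm_num)).comp
        (Nat.tendsto_div_const_atTop (by norm_num))
    simpa using (h1.const_mul K).const_sub 1
  refine tendsto_of_tendsto_of_tendsto_of_le_of_le' hlim tendsto_const_nhds ?_ ?_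
  · filter_upwards [Filter.eventually_ge_atTop 20] with p hp
    obtain ⟨b, h1, h2, h3⟩ := key p hp
    rw [h3]
    linarith
  · filter_upwards [Filter.eventually_ge_atTop 20] with p hp
    obtain ⟨b, h1, h2, h3⟩ := key p hp
    rw [h3]
    linarith
end

section
/- Let G be the free group on generators a_1,…,a_n and let H be a free group of rank greater than 1. Then the set of triples (φ, u, v) ∈ H^n × H × H (where φ is identified with the homomorphism G → H sending a_i to its i-th coordinate) such that u·v⁻¹ does not lie in the image subgroup φ(G) is generic: its asymptotic density in H^{n+2} equals 1. -/
namespace GNI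
open FreeGroup

def lcpL {α : Type*} [DecidableEq α] : List α → List α → ℕ
  | [], _ => 0
  | _ :: _, [] => 0
  | a :: s, b :: t => if a = b then lcpL s t + 1 else 0

lemma le_lcpL {α : Type*} [DecidableEq α] (k : ℕ) (s t : List α) :
    k ≤ lcpL s t ↔ s.take k = t.take k ∧ k ≤ s.length ∧ k ≤ t.length := by
  induction s generalizing k t with
  | nil =>
    simp only [lcpL, List.length_nil]
    constructor
    · intro h
      obtain rfl : k = 0 := by omega
      simp
    · rintro ⟨_, h, _⟩; exact h
  | cons a s ih =>
    cases t with
    | nil =>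
      simp only [lcpL, List.length_nil]
      constructor
      · intro h
        obtain rfl : k = 0 := by omega
        simp
      · rintro ⟨_, _, h⟩; exact h
    | cons b t =>
      cases k with
      | zero => simp
      | succ k =>
        have := ih k t
        by_cases hab : a = b
        · simp [lcpL, hab, this]
        · simp [lcpL, hab]

variable {α : Type*} [DecidableEq α]

lemma norm_mk_of_reduced {L : List (α × Bool)} (h : IsReduced L) : norm (mk L) = L.length := by
  rw [FreeGroup.norm, toWord_mk, h.reduce_eq]

lemma norm_lists (s t : List (α × Bool)) (hs : IsReduced s) (ht : IsReduced t) :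
    norm ((mk s)⁻¹ * mk t) + 2 * lcpL s t = s.length + t.length := by
  induction s generalizing t with
  | nil =>
    have : (mk ([] : List (α × Bool))) = 1 := rfl
    simp [lcpL, this, norm_mk_of_reduced ht]
  | cons a s ih =>
    cases t with
    | nil =>
      have : (mk ([] : List (α × Bool))) = 1 := rfl
      simp only [lcpL, this, mul_one, norm_inv_eq, norm_mk_of_reduced hs]
      simp
    | cons b t =>
      by_cases hab : a = b
      · subst hab
        have h1 := ih t (hs.infix ⟨[a], [], by simp⟩) (ht.infix ⟨[a], [], by simp⟩)
        have e : ∀ l : List (α × Bool), mk (a :: l) = mk [a] * mk l := fun l => by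
          rw [mul_mk]; rfl
        rw [e s, e t]
        have : (mk [a] * mk s)⁻¹ * (mk [a] * mk t) = (mk s)⁻¹ * mk t := by group
        rw [this]
        simp only [lcpL, if_true, List.length_cons]
        omega
      · simp only [lcpL, hab, if_false]
        rw [inv_mk, mul_mk, norm_mk_of_reduced]
        · simp [invRev_length]
        · have h1 : IsReduced (invRev (a :: s)) := by
            rw [isReduced_iff_reduce_eq, reduce_invRev, hs.reduce_eq]
          rw [invRev_cons] at h1 ⊢
          refine h1.append_overlap ?_ (by simp [invRev])
          rcases a with ⟨a, x⟩
          rcases b with ⟨b, y⟩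
          have : IsReduced ((a, !x) :: (b, y) :: t) := by
            rw [isReduced_cons_cons]
            refine ⟨?_, ht⟩
            intro h
            simp only at h
            subst h
            simp only [Prod.mk.injEq, true_and] at hab
            revert hab
            cases x <;> cases y <;> simp
          simpa [invRev] using this

def lcp (a b : FreeGroup α) : ℕ := lcpL a.toWord b.toWord

lemma norm_lcp (a b : FreeGroup α) : norm (a⁻¹ * b) + 2 * lcp a b = norm a + norm b := by
  have := norm_lists a.toWord b.toWord isReduced_toWord isReduced_toWord
  rw [mk_toWord, mk_toWord] at this
  exact this

lemma lcp_comm (a b : FreeGroup α) : lcp a b = lcp b a := by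
  have h1 := norm_lcp a b
  have h2 := norm_lcp b a
  have : norm (a⁻¹ * b) = norm (b⁻¹ * a) := by
    rw [← norm_inv_eq]; congr 1; group
  omega

lemma lcp_ultra {k : ℕ} {a b c : FreeGroup α} (h1 : k ≤ lcp a b) (h2 : k ≤ lcp b c) :
    k ≤ lcp a c := by
  unfold lcp at *
  rw [le_lcpL] at *
  exact ⟨h1.1.trans h2.1, h1.2.1, h2.2.2⟩

/-- prefix -/
def pre (d : ℕ) (a : FreeGroup α) : FreeGroup α := mk (a.toWord.take d)

lemma pre_eq {d : ℕ} {a b : FreeGroup α} (h : d ≤ lcp a b) : pre d a = pre d b := by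
  unfold lcp at h
  rw [le_lcpL] at h
  simp [pre, h.1]

lemma toWord_pre (d : ℕ) (a : FreeGroup α) : (pre d a).toWord = a.toWord.take d := by
  rw [pre, toWord_mk, IsReduced.reduce_eq]
  exact isReduced_toWord.infix (List.take_prefix _ _).isInfix

lemma norm_pre {d : ℕ} {a : FreeGroup α} (h : d ≤ norm a) : norm (pre d a) = d := by
  rw [FreeGroup.norm, toWord_pre, List.length_take]
  exact min_eq_left h

lemma lcp_pre {d : ℕ} {a : FreeGroup α} (h : d ≤ norm a) : d ≤ lcp (pre d a) a := by
  have := norm_pre h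
  unfold lcp
  rw [le_lcpL]
  refine ⟨by rw [toWord_pre]; simp, this.ge, h⟩

lemma lcp_le_left (a b : FreeGroup α) : lcp a b ≤ norm a := ((le_lcpL _ _ _).1 le_rfl).2.1
lemma lcp_le_right (a b : FreeGroup α) : lcp a b ≤ norm b := ((le_lcpL _ _ _).1 le_rfl).2.2

lemma cancel1 {d p : ℕ} {a b : FreeGroup α} (h : d ≤ lcp a b) (ha : norm a ≤ p) :
    norm ((pre d b)⁻¹ * a) ≤ p - d := by
  have hb : d ≤ norm b := h.trans (lcp_le_right _ _)
  have h1 := lcp_ultra (lcp_pre hb) (h.trans (lcp_comm a b).le)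
  have h2 := norm_lcp (pre d b) a
  have h3 := norm_pre hb
  omega

lemma cancel2 {d p : ℕ} {a : FreeGroup α} (h : d ≤ lcp a a⁻¹) (ha : norm a ≤ p)
    (h2 : 2 * d ≤ norm a) :
    ∃ a' : FreeGroup α, FreeGroup.norm a' ≤ p - d ∧ a = a' * (pre d a')⁻¹ := by
  have hb : d ≤ norm a := by omega
  refine ⟨a * pre d a, ?_, ?_⟩
  · have h1 := lcp_ultra (lcp_pre hb) h
    have h2 := norm_lcp (a⁻¹) (pre d a)
    rw [lcp_comm] at h2
    rw [inv_inv, norm_inv_eq, norm_pre hb] at h2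
    omega
  · have h1 := lcp_ultra (lcp_pre hb) h
    have h4 := norm_lcp (a⁻¹) (pre d a)
    rw [lcp_comm] at h4
    rw [inv_inv, norm_inv_eq, norm_pre hb] at h4
    have h5 := norm_lcp (a * pre d a) a
    have h7 : (a * pre d a)⁻¹ * a = (pre d a)⁻¹ := by group
    rw [h7, norm_inv_eq, norm_pre hb] at h5
    have h6 := lcp_le_left (pre d a) a⁻¹
    rw [norm_pre hb] at h6
    have : d ≤ lcp (a * pre d a) a := by omega
    rw [pre_eq this]; group

/-- letter values -/
def val {β : Type*} (φ : β → FreeGroup α) (x : β × Bool) : FreeGroup α :=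
  cond x.2 (φ x.1) (φ x.1)⁻¹

structure Good {β : Type*} (d : ℕ) (φ : β → FreeGroup α) : Prop where
  len : ∀ i, 4 * d ≤ norm (φ i)
  can : ∀ x y, x ≠ y → lcp (val φ x) (val φ y) < d

lemma good_list {β : Type*} {d : ℕ} {φ : β → FreeGroup α} (hg : Good d φ)
    (x : β × Bool) (L : List (β × Bool)) (h : IsReduced (x :: L)) :
    2 * d * (L.length + 1) ≤ norm ((x :: L).map (val φ)).prod ∧
    norm (val φ x) ≤ lcp ((x :: L).map (val φ)).prod (val φ x) + d := by
  have hlen : ∀ y, 4 * d ≤ norm (val φ y) := by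
    rintro ⟨i, b⟩
    have := hg.len i
    cases b <;> simpa [val] using this
  induction L generalizing x with
  | nil =>
    have := hlen x
    have h3 := norm_lcp (val φ x) (val φ x)
    simp only [inv_mul_cancel, FreeGroup.norm_one] at h3
    simp only [List.map_cons, List.map_nil, List.prod_cons, List.prod_nil, mul_one,
      List.length_nil]
    constructor <;> omega
  | cons y L ih =>
    have hr : IsReduced (y :: L) := (isReduced_cons_cons.1 h).2
    have hxy := (isReduced_cons_cons.1 h).1
    obtain ⟨h1, h2⟩ := ih y hr
    rw [List.map_cons, List.prod_cons]
    set P := (List.map (val φ) (y :: L)).prod with hP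
    have hinv : (val φ x)⁻¹ = val φ (x.1, !x.2) := by
      rcases x with ⟨i, b⟩
      cases b <;> simp [val]
    have hne : ((x.1, !x.2) : β × Bool) ≠ y := by
      rintro rfl
      simp at hxy
    have h3 := hg.can _ _ hne
    rw [← hinv] at h3
    have hy := hlen y
    have hx := hlen x
    have h4 : lcp (val φ x)⁻¹ P < d := by
      by_contra hc
      push Not at hc
      have := lcp_ultra hc (c := val φ y) (by omega)
      omega
    have h5 := norm_lcp (val φ x)⁻¹ P
    rw [inv_inv, norm_inv_eq] at h5
    have h6 := norm_lcp (val φ x * P) (val φ x)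
    have h7 : (val φ x * P)⁻¹ * val φ x = P⁻¹ := by group
    rw [h7, norm_inv_eq] at h6
    constructor
    · rw [List.length_cons]
      have : 2 * d * (L.length + 1 + 1) = 2 * d * (L.length + 1) + 2 * d := by ring
      omega
    · omega

lemma good_norm {β : Type*} [DecidableEq β] {d : ℕ} {φ : β → FreeGroup α} (hg : Good d φ)
    (w : FreeGroup β) : 2 * d * norm w ≤ norm (lift φ w) := by
  have hw : lift φ w = (w.toWord.map (val φ)).prod := by
    conv_lhs => rw [← mk_toWord (x := w)]
    rw [lift_mk]; rfl
  rw [hw, FreeGroup.norm]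
  have hr : IsReduced w.toWord := isReduced_toWord
  generalize w.toWord = L at *
  cases L with
  | nil => simp
  | cons x L => exact (good_list hg x L hr).1

lemma ball_finite (n p : ℕ) : {w : FreeGroup (Fin n) | FreeGroup.norm w ≤ p}.Finite := by
  have h := List.finite_length_le (Fin n × Bool) p
  exact Set.Finite.preimage (f := FreeGroup.toWord) toWord_injective.injOn h

noncomputable def ball (n p : ℕ) : Finset (FreeGroup (Fin n)) := (ball_finite n p).toFinset

lemma mem_ball {n p : ℕ} {w : FreeGroup (Fin n)} : w ∈ ball n p ↔ FreeGroup.norm w ≤ p := by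
  simp [ball]

lemma ballCount_eq (n p : ℕ) : ballCount n p = (ball n p).card := by
  rw [ballCount, ← Nat.card_eq_finsetCard]
  exact Nat.card_congr (Equiv.subtypeEquivRight fun w => mem_ball.symm)

def ext (L : List (α × Bool)) (j : α) : List (α × Bool) :=
  match L with
  | [] => [(j, true)]
  | x :: t => (j, x.2) :: x :: t

lemma ext_reduced {L : List (α × Bool)} (h : IsReduced L) (j : α) : IsReduced (ext L j) := by
  cases L with
  | nil => simp [ext]
  | cons x t => simpa [ext] using h

lemma ext_length (L : List (α × Bool)) (j : α) : (ext L j).length = L.length + 1 := by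
  cases L <;> simp [ext]

lemma ext_inj {L L' : List (α × Bool)} {j j' : α} (h : ext L j = ext L' j') :
    j = j' ∧ L = L' := by
  cases L <;> cases L' <;> simp_all [ext]

lemma ball_succ (n k : ℕ) : n * (ball n k).card ≤ (ball n (k + 1)).card := by
  have : n * (ball n k).card = ((Finset.univ : Finset (Fin n)) ×ˢ ball n k).card := by
    simp [Finset.card_product]
  rw [this]
  refine Finset.card_le_card_of_injOn (fun z => mk (ext z.2.toWord z.1)) ?_ ?_
  · rintro ⟨j, w⟩ h
    simp only [Finset.coe_product, Set.mem_prod, Finset.mem_coe, mem_ball] at h ⊢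
    have h2 : w.toWord.length ≤ k := h.2
    rw [norm_mk_of_reduced (ext_reduced isReduced_toWord j), ext_length]
    omega
  · rintro ⟨j, w⟩ _ ⟨j', w'⟩ _ h
    have h := congrArg toWord h
    simp only [toWord_mk] at h
    rw [(ext_reduced isReduced_toWord _).reduce_eq,
      (ext_reduced isReduced_toWord _).reduce_eq] at h
    obtain ⟨h1, h2⟩ := ext_inj h
    rw [h1, toWord_injective h2]

lemma ball_add {n : ℕ} (hn : 1 < n) (k d : ℕ) :
    2 ^ d * (ball n k).card ≤ (ball n (k + d)).card := by
  induction d with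
  | zero => simp
  | succ d ih =>
    calc 2 ^ (d + 1) * (ball n k).card = 2 * (2 ^ d * (ball n k).card) := by ring
      _ ≤ n * (ball n (k + d)).card := Nat.mul_le_mul hn ih
      _ ≤ _ := ball_succ n (k + d)

lemma ball_pos (n k : ℕ) : 1 ≤ (ball n k).card :=
  Finset.card_pos.2 ⟨1, mem_ball.2 (by simp)⟩

lemma ball_mono (n : ℕ) {k l : ℕ} (h : k ≤ l) : ball n k ⊆ ball n l := fun _ hx =>
  mem_ball.2 ((mem_ball.1 hx).trans h)

open Classical in
noncomputable def badA (n p d r : ℕ) (ψ : Fin r → FreeGroup (Fin n)) :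
    Finset (FreeGroup (Fin n)) :=
  (ball n p).filter fun a => FreeGroup.norm a < 4 * d ∨ (4 * d ≤ FreeGroup.norm a ∧ d ≤ lcp a a⁻¹) ∨
    ∃ z : Fin r × Bool × Bool, d ≤ lcp (cond z.2.1 a a⁻¹) (val ψ (z.1, z.2.2))

lemma badA_card {n p d r : ℕ} (hd : 8 * d ≤ p) (ψ : Fin r → FreeGroup (Fin n)) :
    (badA n p d r ψ).card ≤ (2 + 4 * r) * (ball n (p - d)).card := by
  classical
  set K := ball n (p - d) with hK
  let g : Fin r × Bool × Bool → FreeGroup (Fin n) → FreeGroup (Fin n) := fun z c =>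
    cond z.2.1 (pre d (val ψ (z.1, z.2.2)) * c) (pre d (val ψ (z.1, z.2.2)) * c)⁻¹
  have hsub : badA n p d r ψ ⊆ (K ∪ K.image (fun c => c * (pre d c)⁻¹)) ∪
      Finset.univ.biUnion (fun z => K.image (g z)) := by
    intro a ha
    simp only [badA, Finset.mem_filter, mem_ball] at ha
    obtain ⟨hp, h | ⟨h, h'⟩ | ⟨⟨j, e, e'⟩, hz⟩⟩ := ha
    · refine Finset.mem_union_left _ (Finset.mem_union_left _ (mem_ball.2 ?_))
      omega
    · refine Finset.mem_union_left _ (Finset.mem_union_right _ ?_)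
      obtain ⟨a', h1, h2⟩ := cancel2 h' hp (by omega)
      exact Finset.mem_image.2 ⟨a', mem_ball.2 h1, h2.symm⟩
    · refine Finset.mem_union_right _ (Finset.mem_biUnion.2 ⟨(j, e, e'), Finset.mem_univ _, ?_⟩)
      refine Finset.mem_image.2 ⟨(pre d (val ψ (j, e')))⁻¹ * cond e a a⁻¹, mem_ball.2 ?_, ?_⟩
      · apply cancel1 hz
        cases e <;> simpa using hp
      · cases e <;> simp [g]
  refine (Finset.card_le_card hsub).trans ((Finset.card_union_le _ _).trans ?_)
  have h1 := (Finset.card_union_le K (K.image (fun c => c * (pre d c)⁻¹)))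
  have h2 := Finset.card_image_le (s := K) (f := fun c => c * (pre d c)⁻¹)
  have h3 := Finset.card_biUnion_le_card_mul (Finset.univ : Finset (Fin r × Bool × Bool))
    (fun z => K.image (g z)) K.card (fun z _ => Finset.card_image_le)
  simp only [Finset.card_univ, Fintype.card_prod, Fintype.card_fin, Fintype.card_bool] at h3
  have : (2 + 4 * r) * K.card = K.card + K.card + r * (2 * 2) * K.card := by ring
  omega

open Classical in
lemma notgood_card {n p d m : ℕ} (hn : 1 < n) (hd : 8 * d ≤ p) :
    ((Fintype.piFinset fun _ : Fin m => ball n p).filter fun φ => ¬ Good d φ).card * 2 ^ d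
      ≤ m * (2 + 4 * m) * (ball n p).card ^ m := by
  cases m with
  | zero =>
    rw [Finset.filter_false_of_mem]
    · simp
    · intro φ _
      push Not
      exact ⟨fun i => i.elim0, fun x => x.1.elim0⟩
  | succ r =>
    set B := ball n p
    let S : Fin (r + 1) → Finset (Fin (r + 1) → FreeGroup (Fin n)) := fun i =>
      (Fintype.piFinset fun _ : Fin (r + 1) => B).filter
        fun φ => φ i ∈ badA n p d r (fun j => φ (i.succAbove j))
    have hS : ∀ i, (S i).card ≤ (2 + 4 * r) * (ball n (p - d)).card * B.card ^ r := by
      intro i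
      have := Finset.card_le_mul_card_image_of_maps_to (s := S i)
        (f := fun φ => fun j => φ (i.succAbove j))
        (t := Fintype.piFinset fun _ : Fin r => B) (by
          intro φ hφ
          simp only [S, Finset.mem_filter, Fintype.mem_piFinset] at hφ ⊢
          exact fun j => hφ.1 _) ((2 + 4 * r) * (ball n (p - d)).card) (by
          intro ψ _
          refine le_trans ?_ (badA_card hd ψ)
          refine Finset.card_le_card_of_injOn (fun φ => φ i) ?_ ?_
          · intro φ hφ
            simp only [S, Finset.coe_filter, Finset.mem_filter, Set.mem_ofPred_eq] at hφ
            obtain ⟨⟨_, h⟩, rfl⟩ := hφ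
            exact h
          · intro φ hφ φ' hφ' h
            simp only [Finset.coe_filter, Set.mem_ofPred_eq] at hφ hφ'
            have h2 := hφ.2.trans hφ'.2.symm
            funext k
            rcases Fin.eq_self_or_eq_succAbove i k with rfl | ⟨j, rfl⟩
            · exact h
            · exact congrFun h2 j)
      rwa [Fintype.card_piFinset_const] at this
    have hsub : ((Fintype.piFinset fun _ : Fin (r + 1) => B).filter fun φ => ¬ Good d φ) ⊆
        Finset.univ.biUnion S := by
      intro φ hφ
      simp only [Finset.mem_filter, Fintype.mem_piFinset] at hφ
      obtain ⟨hB, hg⟩ := hφ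
      by_contra hc
      have hc : ∀ i, φ i ∉ badA n p d r (fun j => φ (i.succAbove j)) := by
        intro i hi
        exact hc (Finset.mem_biUnion.2 ⟨i, Finset.mem_univ _, by
          simp only [S, Finset.mem_filter, Fintype.mem_piFinset]; exact ⟨hB, hi⟩⟩)
      apply hg
      have hc' : ∀ i, ¬ _ := fun i hi => hc i (Finset.mem_filter.2 ⟨hB i, hi⟩)
      have hlen : ∀ i, 4 * d ≤ FreeGroup.norm (φ i) := fun i => by
        by_contra h
        exact hc' i (Or.inl (by omega))
      refine ⟨hlen, ?_⟩
      rintro ⟨i, e⟩ ⟨k, e'⟩ hne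
      by_contra h
      push Not at h
      rcases Fin.eq_self_or_eq_succAbove i k with rfl | ⟨j, rfl⟩
      · refine hc' k (Or.inr (Or.inl ⟨hlen k, ?_⟩))
        cases e <;> cases e' <;> simp [val] at h hne ⊢
        · rwa [lcp_comm]
        · exact h
      · exact hc' i (Or.inr (Or.inr ⟨(j, e, e'), h⟩))
    have h1 := (Finset.card_le_card hsub).trans
      (Finset.card_biUnion_le_card_mul _ S _ (fun i _ => hS i))
    simp only [Finset.card_univ, Fintype.card_fin] at h1
    have h2 := ball_add hn (p - d) d
    rw [show p - d + d = p by omega] at h2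
    calc _ ≤ (r + 1) * ((2 + 4 * r) * (ball n (p - d)).card * B.card ^ r) * 2 ^ d :=
          Nat.mul_le_mul_right _ h1
      _ = (r + 1) * (2 + 4 * r) * B.card ^ r * (2 ^ d * (ball n (p - d)).card) := by ring
      _ ≤ (r + 1) * (2 + 4 * (r + 1)) * B.card ^ r * B.card := by gcongr; omega
      _ = _ := by ring

open Classical in
noncomputable def box (n p m : ℕ) :
    Finset ((Fin m → FreeGroup (Fin n)) × FreeGroup (Fin n) × FreeGroup (Fin n)) :=
  (Fintype.piFinset fun _ : Fin m => ball n p) ×ˢ (ball n p ×ˢ ball n p)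

lemma box_card (n p m : ℕ) : (box n p m).card = (ball n p).card ^ (m + 2) := by
  rw [box, Finset.card_product, Finset.card_product, Fintype.card_piFinset_const]
  ring

open Classical in
lemma bad_card {n p d m : ℕ} (hn : 1 < n) (hd : 8 * d ≤ p) (hd' : p < 8 * d + 8) (h1 : 1 ≤ d) :
    ((box n p m).filter fun x => x.2.1 * x.2.2⁻¹ ∈ (FreeGroup.lift x.1).range).card * 2 ^ d
      ≤ (m * (2 + 4 * m) + (ball m 16).card) * (ball n p).card ^ (m + 2) := by
  set B := ball n p with hB
  set N := (Fintype.piFinset fun _ : Fin m => B).filter fun φ => ¬ Good d φ with hN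
  let f : (Fin m → FreeGroup (Fin n)) × FreeGroup (Fin n) × FreeGroup (Fin m) →
    (Fin m → FreeGroup (Fin n)) × FreeGroup (Fin n) × FreeGroup (Fin n) :=
    fun x => (x.1, FreeGroup.lift x.1 x.2.2 * x.2.1, x.2.1)
  have hsub : ((box n p m).filter fun x => x.2.1 * x.2.2⁻¹ ∈ (FreeGroup.lift x.1).range) ⊆
      (N ×ˢ (B ×ˢ B)) ∪
        ((Fintype.piFinset fun _ : Fin m => B) ×ˢ (B ×ˢ ball m 16)).image f := by
    rintro ⟨φ, u, v⟩ hx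
    simp only [box, Finset.mem_filter, Finset.mem_product] at hx
    obtain ⟨⟨hφ, hu, hv⟩, w, hw⟩ := hx
    by_cases hg : Good d φ
    · refine Finset.mem_union_right _ (Finset.mem_image.2 ⟨(φ, v, w), ?_, ?_⟩)
      · simp only [Finset.mem_product]
        refine ⟨hφ, hv, mem_ball.2 ?_⟩
        have h2 := good_norm hg w
        rw [hw] at h2
        have h3 := FreeGroup.norm_mul_le u v⁻¹
        rw [FreeGroup.norm_inv_eq] at h3
        have h4 := mem_ball.1 hu
        have h5 := mem_ball.1 hv
        by_contra hc
        push Not at hc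
        have h6 : 2 * d * 17 ≤ 2 * d * w.norm := Nat.mul_le_mul_left _ hc
        omega
      · simp [f, hw]
    · refine Finset.mem_union_left _ ?_
      simp only [hN, Finset.mem_product, Finset.mem_filter]
      exact ⟨⟨hφ, hg⟩, hu, hv⟩
  have h2 := (Finset.card_le_card hsub).trans (Finset.card_union_le _ _)
  have h3 := Finset.card_image_le
    (s := (Fintype.piFinset fun _ : Fin m => B) ×ˢ (B ×ˢ ball m 16)) (f := f)
  simp only [Finset.card_product, Fintype.card_piFinset_const] at h2 h3
  have h4 : N.card * 2 ^ d ≤ m * (2 + 4 * m) * B.card ^ m := notgood_card hn hd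
  have h5 : 2 ^ d ≤ B.card := by
    have := ball_add hn (p - d) d
    rw [show p - d + d = p by omega] at this
    exact (Nat.le_mul_of_pos_right _ (ball_pos n _)).trans this
  calc _ ≤ (N.card * (B.card * B.card) + B.card ^ m * (B.card * (ball m 16).card)) * 2 ^ d :=
        Nat.mul_le_mul_right _ (h2.trans (Nat.add_le_add_left h3 _))
    _ = (N.card * 2 ^ d) * (B.card * B.card) +
        B.card ^ m * (B.card * (ball m 16).card) * 2 ^ d := by ring
    _ ≤ (m * (2 + 4 * m) * B.card ^ m) * (B.card * B.card) +
        B.card ^ m * (B.card * (ball m 16).card) * B.card := by gcongr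
    _ = _ := by ring

end GNI

/-- Let `G` be the free group on `m` generators and `H` the free group
of rank `n > 1`. The set of triples `(φ, u, v) ∈ H^m × H × H` such that `u * v⁻¹` does not
lie in the image subgroup `φ(G)` is generic: its asymptotic density in `H^{m+2}` is `1`. -/
theorem generic_not_in_image {m n : ℕ} (hn : 1 < n) :
    Filter.Tendsto (fun p : ℕ =>
      (Nat.card {x : (Fin m → FreeGroup (Fin n)) × FreeGroup (Fin n) × FreeGroup (Fin n) //
          x.2.1 * x.2.2⁻¹ ∉ (FreeGroup.lift x.1).range ∧
          (∀ i, FreeGroup.norm (x.1 i) ≤ p) ∧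
          FreeGroup.norm x.2.1 ≤ p ∧ FreeGroup.norm x.2.2 ≤ p} : ℝ) /
        (ballCount n p : ℝ) ^ (m + 2))
      Filter.atTop (nhds 1) := by
  classical
  have hcard : ∀ p, Nat.card {x : (Fin m → FreeGroup (Fin n)) × FreeGroup (Fin n) × FreeGroup (Fin n) //
          x.2.1 * x.2.2⁻¹ ∉ (FreeGroup.lift x.1).range ∧
          (∀ i, FreeGroup.norm (x.1 i) ≤ p) ∧
          FreeGroup.norm x.2.1 ≤ p ∧ FreeGroup.norm x.2.2 ≤ p} =
      ((GNI.box n p m).filter fun x => ¬ x.2.1 * x.2.2⁻¹ ∈ (FreeGroup.lift x.1).range).card := by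
    intro p
    rw [← Nat.card_eq_finsetCard]
    refine Nat.card_congr (Equiv.subtypeEquivRight fun x => ?_)
    simp only [GNI.box, Finset.mem_filter, Finset.mem_product, Fintype.mem_piFinset, GNI.mem_ball]
    tauto
  simp only [hcard, GNI.ballCount_eq]
  set C : ℝ := ((m * (2 + 4 * m) + (GNI.ball m 16).card : ℕ) : ℝ) with hC
  have hlim : Filter.Tendsto (fun p : ℕ => 1 - C * (1 / 2 : ℝ) ^ (p / 8)) Filter.atTop (nhds 1) := by
    have h1 : Filter.Tendsto (fun p : ℕ => (1 / 2 : ℝ) ^ (p / 8)) Filter.atTop (nhds 0) :=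
      (tendsto_pow_atTop_nhds_zero_of_lt_one (by norm_num) (by norm_num)).comp
        (Nat.tendsto_div_const_atTop (by norm_num))
    simpa using (h1.const_mul C).const_sub 1
  refine tendsto_of_tendsto_of_tendsto_of_le_of_le' hlim tendsto_const_nhds ?_ ?_
  · filter_upwards [Filter.eventually_ge_atTop 8] with p hp
    have hb := GNI.bad_card (m := m) hn (p := p) (d := p / 8) (by omega) (by omega) (by omega)
    have hs := Finset.card_filter_add_card_filter_not (s := GNI.box n p m)
      (fun x => x.2.1 * x.2.2⁻¹ ∈ (FreeGroup.lift x.1).range)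
    rw [GNI.box_card] at hs
    have hpos : (0 : ℝ) < ((GNI.ball n p).card : ℝ) ^ (m + 2) :=
      pow_pos (by exact_mod_cast GNI.ball_pos n p) _
    rw [le_div_iff₀ hpos]
    have hb' : (((GNI.box n p m).filter fun x =>
        x.2.1 * x.2.2⁻¹ ∈ (FreeGroup.lift x.1).range).card : ℝ) * 2 ^ (p / 8) ≤
        C * ((GNI.ball n p).card : ℝ) ^ (m + 2) := by
      rw [hC]; exact_mod_cast hb
    have hs' : (((GNI.box n p m).filter fun x =>
        x.2.1 * x.2.2⁻¹ ∈ (FreeGroup.lift x.1).range).card : ℝ) +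
        (((GNI.box n p m).filter fun x =>
        ¬ x.2.1 * x.2.2⁻¹ ∈ (FreeGroup.lift x.1).range).card : ℝ) =
        ((GNI.ball n p).card : ℝ) ^ (m + 2) := by exact_mod_cast hs
    have h2 : (0 : ℝ) < 2 ^ (p / 8) := by positivity
    rw [← le_div_iff₀ h2] at hb'
    have : C * ((GNI.ball n p).card : ℝ) ^ (m + 2) / 2 ^ (p / 8) =
        C * (1 / 2 : ℝ) ^ (p / 8) * ((GNI.ball n p).card : ℝ) ^ (m + 2) := by
      rw [one_div, inv_pow]; field_simp
    rw [this] at hb'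
    linarith
  · refine Filter.Eventually.of_forall fun p => ?_
    have hpos : (0 : ℝ) < ((GNI.ball n p).card : ℝ) ^ (m + 2) :=
      pow_pos (by exact_mod_cast GNI.ball_pos n p) _
    rw [div_le_one hpos]
    have := Finset.card_filter_le (GNI.box n p m)
      (fun x => ¬ x.2.1 * x.2.2⁻¹ ∈ (FreeGroup.lift x.1).range)
    rw [GNI.box_card] at this
    exact_mod_cast this
end

section
/- Let G be the free group on generators a_1,…,a_n (n ≥ 1) and let H be a free group of rank greater than 1. Then the set of injective homomorphisms φ : G → H, identified with n-tuples (φ(a_1),…,φ(a_n)) ∈ H^n, is generic: its asymptotic density in H^n equals 1. -/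
namespace GenInj

open FreeGroup

variable {n : ℕ}

theorem lcp {α : Type*} : ∀ a b : List α, ∃ c r s : List α, a = c ++ r ∧ b = c ++ s ∧
    ∀ x ∈ r.head?, ∀ y ∈ s.head?, x ≠ y
  | [], b => ⟨[], [], b, by simp⟩
  | a, [] => ⟨[], a, [], by simp⟩
  | x :: a, y :: b => by
    by_cases h : x = y
    · obtain ⟨c, r, s, h1, h2, h3⟩ := lcp a b
      exact ⟨x :: c, r, s, by simp [h1], by simp [h, h2], h3⟩
    · exact ⟨[], x :: a, y :: b, by simp [h]⟩

/-- prefix of length k -/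
def pre (k : ℕ) (w : FreeGroup (Fin n)) : List (Fin n × Bool) := w.toWord.take k

/-- remaining part -/
def suf (k : ℕ) (w : FreeGroup (Fin n)) : FreeGroup (Fin n) := mk (w.toWord.drop k)

theorem pre_suf (k : ℕ) (w : FreeGroup (Fin n)) : mk (pre k w) * suf k w = w := by
  rw [pre, suf, mul_mk, List.take_append_drop, mk_toWord]

theorem norm_suf (k : ℕ) (w : FreeGroup (Fin n)) : norm (suf k w) ≤ norm w - k := by
  refine norm_mk_le.trans ?_
  simp [FreeGroup.norm]

theorem toWord_mk_of_reduced {L : List (Fin n × Bool)} (h : IsReduced L) : (mk L).toWord = L := by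
  rw [toWord_mk, h.reduce_eq]

theorem ping (k : ℕ) (w h : FreeGroup (Fin n)) (hw : 2 * k ≤ norm w)
    (hh : pre k h ≠ pre k w⁻¹) : pre k (w * h) = pre k w := by
  obtain ⟨c, r, s, h1, h2, h3⟩ := lcp w⁻¹.toWord h.toWord
  have hw1 : w.toWord = invRev r ++ invRev c := by
    rw [← invRev_append, ← h1, toWord_inv, invRev_invRev]
  have hc : c.length < k := by
    by_contra hc
    push Not at hc
    apply hh
    rw [pre, pre, h1, h2, List.take_append_of_le_length hc, List.take_append_of_le_length hc]
  have hlen : (invRev r).length + c.length = norm w := by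
    rw [FreeGroup.norm, hw1]; simp
  have hprod : w * h = mk (invRev r ++ s) := by
    have e1 : w = mk (invRev r) * mk (invRev c) := by
      rw [mul_mk, ← hw1, mk_toWord]
    have e2 : h = mk c * mk s := by
      rw [mul_mk, ← h2, mk_toWord]
    have e3 : mk (invRev c) = (mk c)⁻¹ := by simp
    rw [e1, e2, e3, ← mul_mk]; group
  have hred : IsReduced (invRev r ++ s) := by
    have r1 : IsReduced (invRev r ++ invRev c) := hw1 ▸ isReduced_toWord
    have r2 : IsReduced (c ++ s) := h2 ▸ isReduced_toWord
    unfold FreeGroup.IsReduced at *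
    rw [List.isChain_append] at *
    refine ⟨r1.1, r2.2.1, ?_⟩
    intro x hx y hy hxy
    have hx' : (x.1, !x.2) ∈ r.head? := by
      simp only [invRev, List.getLast?_reverse, List.head?_map, Option.mem_def,
        Option.map_eq_some_iff] at hx
      obtain ⟨z, hz, rfl⟩ := hx
      simpa using hz
    have := h3 _ hx' _ hy
    by_contra hne
    apply this
    ext
    · simp [hxy]
    · revert hne; cases x.2 <;> cases y.2 <;> simp
  rw [hprod, pre, pre, toWord_mk_of_reduced hred, hw1, List.take_append_of_le_length (by omega),
    List.take_append_of_le_length (by omega)]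

theorem inj_of_nontrivial {m : ℕ} (k : ℕ) (hm : 2 ≤ m) (f : Fin m → FreeGroup (Fin n))
    (h0 : ∀ i, 2 * k ≤ norm (f i))
    (h1 : ∀ i j, i ≠ j → pre k (f i) ≠ pre k (f j))
    (h2 : ∀ i j, i ≠ j → pre k (f i)⁻¹ ≠ pre k (f j)⁻¹)
    (h3 : ∀ i j, pre k (f i) ≠ pre k (f j)⁻¹) : Function.Injective (FreeGroup.lift f) := by
  have : Nontrivial (Fin m) := Fin.nontrivial_iff_two_le.2 hm
  refine FreeGroup.injective_lift_of_ping_pong f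
    (fun i => {h : FreeGroup (Fin n) | pre k h = pre k (f i)})
    (fun i => {h : FreeGroup (Fin n) | pre k h = pre k (f i)⁻¹}) ?_ ?_ ?_ ?_ ?_ ?_
  · intro i; exact ⟨f i, rfl⟩
  · intro i j hij
    refine Set.disjoint_left.2 fun x hx hy => h1 i j hij (hx.symm.trans hy)
  · intro i j hij
    refine Set.disjoint_left.2 fun x hx hy => h2 i j hij (hx.symm.trans hy)
  · intro i j
    refine Set.disjoint_left.2 fun x hx hy => h3 i j (hx.symm.trans hy)
  · rintro i _ ⟨x, hx, rfl⟩
    exact ping k (f i) x (h0 i) hx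
  · rintro i _ ⟨x, hx, rfl⟩
    refine ping k (f i)⁻¹ x (by simpa using h0 i) ?_
    rw [inv_inv]; exact hx

theorem inj_one (f : Fin 1 → FreeGroup (Fin n)) (h : f 0 ≠ 1) :
    Function.Injective (FreeGroup.lift f) := by
  rw [injective_iff_map_eq_one]
  intro x hx
  have kmul : ∀ x y : FreeGroup (Fin 1), (∃ z : ℤ, x = (FreeGroup.of 0) ^ z) →
      (∃ z : ℤ, y = (FreeGroup.of 0) ^ z) → ∃ z : ℤ, x * y = (FreeGroup.of 0) ^ z := by
    rintro _ _ ⟨a, rfl⟩ ⟨b, rfl⟩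
    exact ⟨a + b, by rw [zpow_add]⟩
  have key : ∃ z : ℤ, x = (FreeGroup.of 0) ^ z := by
    clear hx
    induction x using FreeGroup.induction_on with
    | C1 => exact ⟨0, by simp⟩
    | of i => exact ⟨1, by simp [Subsingleton.elim i 0]⟩
    | inv_of i _ => exact ⟨-1, by simp [Subsingleton.elim i 0]⟩
    | mul x y hx hy => exact kmul x y hx hy
  obtain ⟨z, rfl⟩ := key
  rw [map_zpow, lift_apply_of] at hx
  rcases (IsMulTorsionFree.zpow_eq_one_iff.1 hx) with h' | h'
  · exact absurd h' h
  · simp [h']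

theorem ball_finite (p : ℕ) : {w : FreeGroup (Fin n) | norm w ≤ p}.Finite := by
  refine Set.Finite.of_finite_image (f := toWord) ((List.finite_length_le _ p).subset ?_)
    toWord_injective.injOn
  rintro _ ⟨w, hw, rfl⟩
  exact hw

/-- ball -/
noncomputable def B (n p : ℕ) : Finset (FreeGroup (Fin n)) := (ball_finite p).toFinset

theorem mem_B {p : ℕ} {w : FreeGroup (Fin n)} : w ∈ B n p ↔ norm w ≤ p := by simp [B]

theorem card_B (p : ℕ) : (B n p).card = ballCount n p := by
  rw [ballCount, ← Nat.card_eq_finsetCard]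
  exact Nat.card_congr (Equiv.subtypeEquivRight fun w => mem_B)

/-- prepend -/
def pp (x y : Fin n × Bool) (w : FreeGroup (Fin n)) : FreeGroup (Fin n) :=
  if w.toWord.head? = some (x.1, !x.2) then mk [y] * w else mk [x] * w

theorem toWord_pp (x y : Fin n × Bool) (hxy : x.1 ≠ y.1) (w : FreeGroup (Fin n)) :
    (pp x y w).toWord = (if w.toWord.head? = some (x.1, !x.2) then y else x) :: w.toWord := by
  have aux : ∀ z : Fin n × Bool, (w.toWord.head? ≠ some (z.1, !z.2)) →
      (mk [z] * w).toWord = z :: w.toWord := by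
    intro z hz
    have : IsReduced (z :: w.toWord) := by
      have := isReduced_toWord (x := w)
      unfold FreeGroup.IsReduced at *
      rw [List.isChain_cons]
      refine ⟨?_, this⟩
      intro y hy h1
      by_contra h2
      apply hz
      rw [Option.mem_def] at hy
      rw [hy]
      congr 1
      ext
      · simp [h1]
      · revert h2; cases z.2 <;> cases y.2 <;> simp
    conv_lhs => rw [← mk_toWord (x := w), mul_mk]
    exact toWord_mk_of_reduced this
  unfold pp
  split_ifs with h
  · apply aux
    rw [h]
    intro h'
    simp only [Option.some.injEq, Prod.mk.injEq] at h'
    exact hxy h'.1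
  · exact aux x h

theorem growth (hn : 1 < n) (p : ℕ) : 2 * (B n p).card ≤ (B n (p+1)).card := by
  let a : Fin n := ⟨0, by omega⟩
  let b : Fin n := ⟨1, hn⟩
  have hab : a ≠ b := by simp [a, b]
  let F : FreeGroup (Fin n) × Bool → FreeGroup (Fin n) := fun q => pp (a, q.2) (b, q.2) q.1
  have hF : ∀ q, (F q).toWord = (if q.1.toWord.head? = some (a, !q.2) then (b, q.2) else (a, q.2))
    :: q.1.toWord := fun q => toWord_pp (a, q.2) (b, q.2) hab q.1
  have : (B n p ×ˢ (Finset.univ : Finset Bool)).card ≤ (B n (p+1)).card := by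
    apply Finset.card_le_card_of_injOn F
    · intro q hq
      have hq : norm q.1 ≤ p := by simpa [mem_B] using hq
      rw [Finset.mem_coe, mem_B, FreeGroup.norm, hF]
      simpa [FreeGroup.norm] using hq
    · intro q _ q' _ h
      have h := congrArg toWord h
      rw [hF, hF, List.cons.injEq] at h
      have h1 := toWord_injective h.2
      have h2 := h.1
      ext1
      · exact h1
      · have := congrArg Prod.snd h2
        split_ifs at this <;> simpa using this
  rw [Finset.card_product] at this
  simpa [mul_comm] using this

theorem growth' (hn : 1 < n) (p k : ℕ) : 2 ^ k * (B n p).card ≤ (B n (p+k)).card := by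
  induction k with
  | zero => simp
  | succ k ih =>
    have := growth hn (p + k)
    rw [pow_succ, ← add_assoc]
    linarith

theorem small {m : ℕ} (hn : 1 < n) (p k : ℕ) (hk : k ≤ p) (A : Finset (Fin m → FreeGroup (Fin n)))
    (i : Fin m) (g : FreeGroup (Fin n) → FreeGroup (Fin n))
    (hA : ∀ f ∈ A, ∀ j, norm (f j) ≤ p) (hg : ∀ f ∈ A, norm (g (f i)) ≤ p - k)
    (hinj : ∀ f ∈ A, ∀ f' ∈ A, (∀ j, j ≠ i → f j = f' j) → g (f i) = g (f' i) → f i = f' i) :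
    2 ^ k * A.card ≤ (B n p).card ^ m := by
  classical
  have h1 : A.card ≤ (Fintype.piFinset (Function.update (fun _ : Fin m => B n p) i
      (B n (p - k)))).card := by
    apply Finset.card_le_card_of_injOn (fun f => Function.update f i (g (f i)))
    · intro f hf
      rw [Finset.mem_coe, Fintype.mem_piFinset]
      intro j
      by_cases hj : j = i
      · subst hj; simpa [mem_B] using hg f hf
      · simpa [hj, mem_B] using hA f hf j
    · intro f hf f' hf' h
      have hj : ∀ j, j ≠ i → f j = f' j := by
        intro j hj
        simpa [hj] using congrFun h j
      have hi := hinj f hf f' hf' hj (by simpa using congrFun h i)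
      ext1 j
      by_cases h : j = i
      · rw [h, hi]
      · exact hj j h
  have h2 : (Fintype.piFinset (Function.update (fun _ : Fin m => B n p) i
      (B n (p - k)))).card = (B n (p - k)).card * (B n p).card ^ (m - 1) := by
    rw [Fintype.card_piFinset, ← Finset.mul_prod_erase _ _ (Finset.mem_univ i)]
    congr 1
    · simp
    · rw [Finset.prod_congr rfl (g := fun _ => (B n p).card)]
      · simp
      · intro j hj
        simp [(Finset.mem_erase.1 hj).1]
  have h3 := growth' hn (p - k) k
  rw [Nat.sub_add_cancel hk] at h3
  have hm : m = (m - 1) + 1 := by have := i.2; omega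
  calc 2 ^ k * A.card ≤ 2 ^ k * ((B n (p - k)).card * (B n p).card ^ (m - 1)) :=
        Nat.mul_le_mul_left _ (h1.trans h2.le)
    _ = (2 ^ k * (B n (p - k)).card) * (B n p).card ^ (m - 1) := by ring
    _ ≤ (B n p).card * (B n p).card ^ (m - 1) := Nat.mul_le_mul_right _ h3
    _ = (B n p).card ^ m := by conv_rhs => rw [hm, pow_succ, mul_comm]

/-- bad events -/
def Ev {m : ℕ} (k : ℕ) (f : Fin m → FreeGroup (Fin n)) (i j : Fin m) (t : Fin 4) : Prop :=
  match t with
  | 0 => norm (f i) < 2 * k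
  | 1 => i ≠ j ∧ pre k (f i) = pre k (f j)
  | 2 => i ≠ j ∧ pre k (f i)⁻¹ = pre k (f j)⁻¹
  | 3 => 2 * k ≤ norm (f i) ∧ pre k (f i) = pre k (f j)⁻¹

theorem inj_of_not_Ev {m : ℕ} (hm : 1 ≤ m) (k : ℕ) (f : Fin m → FreeGroup (Fin n))
    (h : ∀ i j t, ¬ Ev k f i j t) : Function.Injective (FreeGroup.lift f) := by
  have h0 : ∀ i, 2 * k ≤ norm (f i) := fun i => not_lt.1 (h i i 0)
  have h3 : ∀ i j, pre k (f i) ≠ pre k (f j)⁻¹ := fun i j e => h i j 3 ⟨h0 i, e⟩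
  rcases Nat.lt_or_ge m 2 with h2 | h2
  · obtain rfl : m = 1 := by omega
    apply inj_one
    intro h1
    apply h3 0 0
    simp [h1]
  · exact inj_of_nontrivial k h2 f h0 (fun i j hij e => h i j 1 ⟨hij, e⟩)
      (fun i j hij e => h i j 2 ⟨hij, e⟩) h3

theorem recover (k : ℕ) (w : FreeGroup (Fin n)) (hw : 2 * k ≤ norm w) :
    pre k (suf k w⁻¹)⁻¹ = pre k w := by
  have e : w⁻¹.toWord.drop k = invRev (w.toWord.take (norm w - k)) := by
    rw [toWord_inv, FreeGroup.norm]
    simp [invRev, List.drop_reverse]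
  have r : IsReduced (w.toWord.take (norm w - k)) :=
    List.IsChain.take (isReduced_toWord (x := w)) _
  rw [suf, e, inv_mk, invRev_invRev, pre, toWord_mk_of_reduced r, pre, List.take_take]
  congr 1
  omega

theorem Ev_small {m : ℕ} (hn : 1 < n) (p k : ℕ) (hk : 3 * k ≤ p)
    (A : Finset (Fin m → FreeGroup (Fin n))) (i j : Fin m) (t : Fin 4)
    (hA : ∀ f ∈ A, ∀ j, norm (f j) ≤ p) (hE : ∀ f ∈ A, Ev k f i j t) :
    2 ^ k * A.card ≤ (B n p).card ^ m := by
  have key : ∀ w w' : FreeGroup (Fin n), pre k w = pre k w' → suf k w = suf k w' → w = w' := by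
    intro w w' h1 h2
    rw [← pre_suf k w, ← pre_suf k w', h1, h2]
  have hs : ∀ f ∈ A, norm (suf k (f i)) ≤ p - k := fun f hf =>
    (norm_suf k (f i)).trans (Nat.sub_le_sub_right (hA f hf i) k)
  have hs' : ∀ f ∈ A, norm (suf k (f i)⁻¹) ≤ p - k := fun f hf =>
    (norm_suf k (f i)⁻¹).trans (Nat.sub_le_sub_right (by simpa using hA f hf i) k)
  match t with
  | 0 =>
    refine small hn p k (by omega) A i id hA ?_ ?_
    · intro f hf
      have : norm (f i) < 2 * k := hE f hf
      simp only [id]; omega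
    · intro f _ f' _ _ h; exact h
  | 1 =>
    refine small hn p k (by omega) A i (suf k) hA hs ?_
    intro f hf f' hf' h1 h2
    obtain ⟨a, b⟩ := hE f hf
    obtain ⟨_, c⟩ := hE f' hf'
    exact key _ _ (by rw [b, c, h1 j a.symm]) h2
  | 2 =>
    refine small hn p k (by omega) A i (fun w => suf k w⁻¹) hA hs' ?_
    intro f hf f' hf' h1 h2
    obtain ⟨a, b⟩ := hE f hf
    obtain ⟨_, c⟩ := hE f' hf'
    exact inv_injective (key _ _ (by rw [b, c, h1 j a.symm]) h2)
  | 3 =>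
    by_cases hij : i = j
    · subst hij
      refine small hn p k (by omega) A i (fun w => suf k w⁻¹) hA hs' ?_
      intro f hf f' hf' h1 h2
      obtain ⟨a, b⟩ := hE f hf
      obtain ⟨a', c⟩ := hE f' hf'
      refine inv_injective (key _ _ ?_ h2)
      rw [← b, ← c, ← recover k _ a, ← recover k _ a']
      exact congrArg (fun w => pre k w⁻¹) h2
    · refine small hn p k (by omega) A i (suf k) hA hs ?_
      intro f hf f' hf' h1 h2
      obtain ⟨a, b⟩ := hE f hf
      obtain ⟨_, c⟩ := hE f' hf'
      exact key _ _ (by rw [b, c, h1 j (Ne.symm hij)]) h2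

theorem main_bound {m : ℕ} (hm : 1 ≤ m) (hn : 1 < n) (p k : ℕ) (hk : 3 * k ≤ p) :
    Nat.card {f : Fin m → FreeGroup (Fin n) //
          Function.Injective (FreeGroup.lift f) ∧ ∀ i, FreeGroup.norm (f i) ≤ p}
        ≤ ballCount n p ^ m ∧
    2 ^ k * ballCount n p ^ m ≤ 2 ^ k * Nat.card {f : Fin m → FreeGroup (Fin n) //
          Function.Injective (FreeGroup.lift f) ∧ ∀ i, FreeGroup.norm (f i) ≤ p}
        + 4 * m * m * ballCount n p ^ m := by
  classical
  set P := Fintype.piFinset (fun _ : Fin m => B n p) with hP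
  have hPc : P.card = ballCount n p ^ m := by simp [hP, card_B]
  have hPm : ∀ f, f ∈ P ↔ ∀ i, norm (f i) ≤ p := by intro f; simp [hP, mem_B]
  have hG : Nat.card {f : Fin m → FreeGroup (Fin n) //
          Function.Injective (FreeGroup.lift f) ∧ ∀ i, FreeGroup.norm (f i) ≤ p} =
      (P.filter (fun f => Function.Injective (FreeGroup.lift f))).card := by
    rw [← Nat.card_eq_finsetCard]
    refine Nat.card_congr (Equiv.subtypeEquivRight ?_)
    intro f
    rw [Finset.mem_filter, hPm, and_comm]
  rw [hG, ← hPc]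
  refine ⟨Finset.card_filter_le _ _, ?_⟩
  let A : Fin m × Fin m × Fin 4 → Finset (Fin m → FreeGroup (Fin n)) :=
    fun q => P.filter (fun f => Ev k f q.1 q.2.1 q.2.2)
  have hA : ∀ q, 2 ^ k * (A q).card ≤ P.card := by
    intro q
    rw [hPc, ← card_B]
    refine Ev_small hn p k hk (A q) q.1 q.2.1 q.2.2 ?_ ?_
    · intro f hf; exact (hPm f).1 (Finset.mem_filter.1 hf).1
    · intro f hf; exact (Finset.mem_filter.1 hf).2
  have hsub : P ⊆ P.filter (fun f => Function.Injective (FreeGroup.lift f)) ∪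
      Finset.univ.biUnion A := by
    intro f hf
    by_cases h : ∀ i j t, ¬ Ev k f i j t
    · exact Finset.mem_union_left _ (Finset.mem_filter.2 ⟨hf, inj_of_not_Ev hm k f h⟩)
    · push Not at h
      obtain ⟨i, j, t, h⟩ := h
      exact Finset.mem_union_right _ (Finset.mem_biUnion.2 ⟨(i, j, t), Finset.mem_univ _,
        Finset.mem_filter.2 ⟨hf, h⟩⟩)
  have h1 := (Finset.card_le_card hsub).trans (Finset.card_union_le _ _)
  have h2 : 2 ^ k * (Finset.univ.biUnion A).card ≤ 4 * m * m * P.card := by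
    calc 2 ^ k * (Finset.univ.biUnion A).card ≤ 2 ^ k * ∑ q, (A q).card :=
          Nat.mul_le_mul_left _ Finset.card_biUnion_le
      _ = ∑ q, 2 ^ k * (A q).card := by rw [Finset.mul_sum]
      _ ≤ ∑ q : Fin m × Fin m × Fin 4, P.card := Finset.sum_le_sum fun q _ => hA q
      _ = 4 * m * m * P.card := by simp only [Finset.sum_const, Finset.card_univ, Fintype.card_prod, Fintype.card_fin, smul_eq_mul]; ring
  calc 2 ^ k * P.card ≤ _ := Nat.mul_le_mul_left _ h1
    _ ≤ _ := by rw [mul_add]; exact Nat.add_le_add_left h2 _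

end GenInj

/-- Let `G` be the free group on `m ≥ 1` generators and `H` the free
group of rank `n > 1`. The set of injective homomorphisms `G → H`, identified with
`m`-tuples of elements of `H`, is generic: its asymptotic density in `H^m` is `1`. -/
theorem generic_injective {m n : ℕ} (hm : 1 ≤ m) (hn : 1 < n) :
    Filter.Tendsto (fun p : ℕ =>
      (Nat.card {f : Fin m → FreeGroup (Fin n) //
          Function.Injective (FreeGroup.lift f) ∧
          ∀ i, FreeGroup.norm (f i) ≤ p} : ℝ) / (ballCount n p : ℝ) ^ m)
      Filter.atTop (nhds 1) := by
  have hpos : ∀ p, (0 : ℝ) < (ballCount n p : ℝ) ^ m := by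
    intro p
    rw [← GenInj.card_B]
    have : 0 < (GenInj.B n p).card := Finset.card_pos.2 ⟨1, by simp [GenInj.mem_B]⟩
    positivity
  have hlim : Filter.Tendsto (fun p : ℕ => 1 - (4 * m * m : ℝ) * (1 / 2 : ℝ) ^ (p / 3))
      Filter.atTop (nhds 1) := by
    have h1 : Filter.Tendsto (fun p : ℕ => p / 3) Filter.atTop Filter.atTop :=
      Nat.tendsto_div_const_atTop (by norm_num)
    have h2 := (tendsto_pow_atTop_nhds_zero_of_lt_one (r := (1 / 2 : ℝ)) (by norm_num)
      (by norm_num)).comp h1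
    have h3 := (h2.const_mul (4 * m * m : ℝ)).const_sub 1
    simpa using h3
  refine tendsto_of_tendsto_of_tendsto_of_le_of_le hlim tendsto_const_nhds ?_ ?_
  · intro p
    have h := (GenInj.main_bound hm hn p (p / 3) (by omega)).2
    have h' : (2 : ℝ) ^ (p / 3) * (ballCount n p : ℝ) ^ m ≤ 2 ^ (p / 3) * (Nat.card
      {f : Fin m → FreeGroup (Fin n) // Function.Injective (FreeGroup.lift f) ∧
        ∀ i, FreeGroup.norm (f i) ≤ p} : ℝ) + 4 * m * m * (ballCount n p : ℝ) ^ m := by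
      exact_mod_cast h
    have h2 : (0 : ℝ) < 2 ^ (p / 3) := by positivity
    simp only []
    rw [le_div_iff₀ (hpos p), one_div, inv_pow]
    refine le_of_mul_le_mul_left ?_ h2
    have e : (2 : ℝ) ^ (p / 3) * ((1 - 4 * m * m * (2 ^ (p / 3))⁻¹) * (ballCount n p : ℝ) ^ m) =
        2 ^ (p / 3) * (ballCount n p : ℝ) ^ m - 4 * m * m * (ballCount n p : ℝ) ^ m := by
      field_simp
    rw [e]
    linarith
  · intro p
    have h := (GenInj.main_bound hm hn p 0 (by omega)).1
    simp only []
    rw [div_le_one (hpos p)]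
    exact_mod_cast h
end

section
/- Let G be the free group on generators a_1,…,a_n (n ≥ 1) and let H be a free group of rank greater than 1. Then the set of surjective homomorphisms φ : G → H, identified with n-tuples (φ(a_1),…,φ(a_n)) ∈ H^n, has asymptotic density 0 in H^n. -/
open FreeGroup in
theorem aux_decomp {α : Type*} (l1 : List (α × Bool)) : ∀ l2 : List (α × Bool),
    IsReduced l1 → IsReduced l2 →
    ∃ a c b, l1 = a ++ c ∧ l2 = invRev c ++ b ∧ IsReduced (a ++ b) := by
  induction l1 using List.reverseRecOn with
  | nil => intro l2 _ h2; exact ⟨[], [], l2, by simp, by simp, by simpa using h2⟩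
  | append_singleton l x ih =>
    intro l2 h1 h2
    cases l2 with
    | nil => exact ⟨l ++ [x], [], [], by simp, by simp, by simpa using h1⟩
    | cons y l2 =>
      by_cases hxy : x.1 = y.1 → x.2 = y.2
      · refine ⟨l ++ [x], [], y :: l2, by simp, by simp, ?_⟩
        unfold FreeGroup.IsReduced at *
        rw [List.append_assoc, List.singleton_append, List.isChain_append_cons_cons]
        exact ⟨h1, hxy, h2⟩
      · obtain ⟨a, c, b, e1, e2, h3⟩ := ih l2 (h1.infix ⟨[], [x], by simp⟩)
          (h2.infix ⟨[y], [], by simp⟩)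
        refine ⟨a, c ++ [x], b, by simp [e1], ?_, h3⟩
        have : y = (x.1, !x.2) := by
          push Not at hxy
          obtain ⟨h4, h5⟩ := hxy
          apply Prod.ext
          · exact h4.symm
          · simp only
            revert h5; cases x.2 <;> cases y.2 <;> simp
        rw [invRev_append, e2, this]
        simp [invRev]

open FreeGroup in
theorem aux_mul {α : Type*} [DecidableEq α] (x y : FreeGroup α) (L : ℕ)
    (h : x⁻¹.toWord.take L ≠ y.toWord.take L) (hx : 2 * L ≤ x.norm) :
    (x * y).toWord.take L = x.toWord.take L ∧ L ≤ (x * y).norm := by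
  obtain ⟨a, c, b, e1, e2, h3⟩ := aux_decomp x.toWord y.toWord isReduced_toWord isReduced_toWord
  have hmul : (x * y).toWord = a ++ b := by
    have : x * y = mk (a ++ b) := by
      rw [← mk_toWord (x := x), ← mk_toWord (x := y), e1, e2, ← mul_mk, ← mul_mk, ← mul_mk, ← inv_mk]
      group
    rw [this, toWord_mk, h3.reduce_eq]
  have hc : c.length < L := by
    by_contra hc
    push Not at hc
    apply h
    rw [toWord_inv, e1, e2, invRev_append, List.take_append_of_le_length (by simpa using hc),
      List.take_append_of_le_length (by simpa using hc)]
  have hl : x.norm = a.length + c.length := by simp [FreeGroup.norm, e1]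
  have ha : L ≤ a.length := by omega
  constructor
  · rw [hmul, e1, List.take_append_of_le_length ha, List.take_append_of_le_length ha]
  · simp [FreeGroup.norm, hmul]; omega

/-- the signed letter -/
def sgnElt {m : ℕ} {G : Type*} [Group G] (f : Fin m → G) (x : Fin m × Bool) : G :=
  cond x.2 (f x.1) (f x.1)⁻¹

open FreeGroup in
theorem aux_word {m n : ℕ} (f : Fin m → FreeGroup (Fin n)) (L : ℕ)
    (h1 : ∀ i, 2 * L ≤ (f i).norm)
    (h2 : ∀ x y, x ≠ y → (sgnElt f x).toWord.take L ≠ (sgnElt f y).toWord.take L)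
    (l : List (Fin m × Bool)) : ∀ x, IsReduced (x :: l) →
      (lift f (mk (x :: l))).toWord.take L = (sgnElt f x).toWord.take L ∧
      L ≤ (lift f (mk (x :: l))).norm := by
  have hs : ∀ x, 2 * L ≤ (sgnElt f x).norm := by
    rintro ⟨i, b⟩; cases b <;> simp [sgnElt, h1]
  induction l with
  | nil =>
    intro x _
    have : lift f (mk [x]) = sgnElt f x := by simp [lift_mk, sgnElt]
    rw [this]
    exact ⟨rfl, by have := hs x; omega⟩
  | cons y l ih =>
    intro x hr
    have hr' := FreeGroup.isReduced_cons_cons.mp hr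
    have e : lift f (mk (x :: y :: l)) = sgnElt f x * lift f (mk (y :: l)) := by
      simp [lift_mk, sgnElt]
    rw [e]
    obtain ⟨i1, i2⟩ := ih y hr'.2
    apply aux_mul _ _ _ _ (hs x)
    rw [i1]
    have : (sgnElt f x)⁻¹ = sgnElt f (x.1, !x.2) := by
      obtain ⟨i, b⟩ := x; cases b <;> simp [sgnElt]
    rw [this]
    apply h2
    rintro rfl
    have := hr'.1 rfl
    simp at this

open FreeGroup in
theorem aux_bad {m n : ℕ} (hn : 1 < n) (f : Fin m → FreeGroup (Fin n)) (L : ℕ) (hL : 2 ≤ L)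
    (hf : Function.Surjective (lift f)) :
    (∃ i, (f i).norm < 2 * L) ∨ ((∀ i, 2 * L ≤ (f i).norm) ∧
      ∃ x y, x ≠ y ∧ (sgnElt f x).toWord.take L = (sgnElt f y).toWord.take L) := by
  by_contra hcon
  push Not at hcon
  obtain ⟨h1, h2⟩ := hcon
  obtain ⟨w, hw⟩ := hf (of ⟨0, by omega⟩)
  cases hl : w.toWord with
  | nil =>
    rw [toWord_eq_nil_iff] at hl
    subst hl
    simp at hw
  | cons x l =>
    have hr : IsReduced (x :: l) := hl ▸ isReduced_toWord
    have := (aux_word f L h1 (h2 h1) l x hr).2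
    rw [← hl, mk_toWord, hw, norm_of] at this
    omega

open FreeGroup in
instance aux_fin (n p : ℕ) : Finite {w : FreeGroup (Fin n) // FreeGroup.norm w ≤ p} := by
  have : Finite {l : List (Fin n × Bool) // l.length ≤ p} :=
    (List.finite_length_le (Fin n × Bool) p).to_subtype
  refine Finite.of_injective
    (fun w => (⟨w.1.toWord, w.2⟩ : {l : List (Fin n × Bool) // l.length ≤ p})) ?_
  intro a b h
  exact Subtype.ext (toWord_injective (congrArg Subtype.val h))

open FreeGroup in
theorem aux_grow {n : ℕ} (hn : 1 < n) (p : ℕ) : 2 * ballCount n p ≤ ballCount n (p + 1) := by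
  have : ∃ σ : Fin n → Fin n, ∀ i, σ i ≠ i := by
    refine ⟨fun i => if i = ⟨0, by omega⟩ then ⟨1, by omega⟩ else ⟨0, by omega⟩, ?_⟩
    intro i
    dsimp only
    split_ifs with h
    · rw [h]; simp
    · exact fun h' => h h'.symm
  obtain ⟨σ, hσ⟩ := this
  let g : List (Fin n × Bool) → Fin n := fun l => match l with
    | [] => ⟨0, by omega⟩
    | x :: _ => σ x.1
  have hred : ∀ (w : FreeGroup (Fin n)) (b : Bool), IsReduced ((g w.toWord, b) :: w.toWord) := by
    intro w b
    have := isReduced_toWord (x := w)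
    cases h : w.toWord with
    | nil => simp
    | cons x l =>
      rw [FreeGroup.isReduced_cons_cons]
      exact ⟨fun h' => absurd h' (hσ _), h ▸ this⟩
  have hw : ∀ (w : FreeGroup (Fin n)) (b : Bool),
      (mk ((g w.toWord, b) :: w.toWord)).toWord = (g w.toWord, b) :: w.toWord := by
    intro w b
    rw [toWord_mk, (hred w b).reduce_eq]
  have := Nat.card_le_card_of_injective
    (fun z : Bool × {w : FreeGroup (Fin n) // FreeGroup.norm w ≤ p} =>
      (⟨mk ((g z.2.1.toWord, z.1) :: z.2.1.toWord), by
        have := z.2.2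
        simp only [FreeGroup.norm] at this ⊢
        rw [hw]; simpa using this⟩ : {w : FreeGroup (Fin n) // FreeGroup.norm w ≤ p + 1})) (by
      rintro ⟨b, w, h⟩ ⟨b', w', h'⟩ e
      simp only [Subtype.mk.injEq] at e
      have e := congrArg toWord e
      rw [hw, hw] at e
      simp only [List.cons.injEq, Prod.mk.injEq] at e
      have := toWord_injective e.2
      subst this
      simp [e.1.2])
  rw [Nat.card_prod] at this
  simpa [ballCount] using this

theorem aux_grow_pow {n : ℕ} (hn : 1 < n) (p L : ℕ) :
    2 ^ L * ballCount n p ≤ ballCount n (p + L) := by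
  induction L with
  | zero => simp
  | succ L ih =>
    have := aux_grow hn (p + L)
    rw [pow_succ, ← add_assoc]
    nlinarith

open FreeGroup in
theorem aux_count {m n : ℕ} (p q : ℕ) (E : Set (Fin m → FreeGroup (Fin n))) (i : Fin m)
    (hE : ∀ f ∈ E, ∀ j, (f j).norm ≤ p)
    (t : (Fin m → FreeGroup (Fin n)) → FreeGroup (Fin n))
    (ht : ∀ f ∈ E, (t f).norm ≤ q)
    (hinj : ∀ f ∈ E, ∀ g ∈ E, t f = t g → (∀ j, j ≠ i → f j = g j) → f i = g i) :
    E.Finite ∧ E.ncard ≤ ballCount n q * ballCount n p ^ (m - 1) := by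
  let F : E → {w : FreeGroup (Fin n) // FreeGroup.norm w ≤ q} ×
      ({j : Fin m // j ≠ i} → {w : FreeGroup (Fin n) // FreeGroup.norm w ≤ p}) :=
    fun f => (⟨t f.1, ht _ f.2⟩, fun j => ⟨f.1 j.1, hE _ f.2 _⟩)
  have hF : Function.Injective F := by
    rintro ⟨f, hf⟩ ⟨g, hg⟩ e
    simp only [F, Prod.mk.injEq, Subtype.mk.injEq, funext_iff, Subtype.forall] at e
    apply Subtype.ext
    funext j
    by_cases hj : j = i
    · subst hj; exact hinj f hf g hg e.1 e.2
    · exact e.2 j hj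
  refine ⟨Set.finite_coe_iff.mp (Finite.of_injective F hF), ?_⟩
  have := Nat.card_le_card_of_injective F hF
  rw [Nat.card_prod, Nat.card_fun] at this
  simpa [ballCount, Set.ncard, Nat.card_coe_set_eq] using this

/-- bad events -/
def badSet (m n p L : ℕ) : (Fin m ⊕ (Fin m × Bool) × (Fin m × Bool)) →
    Set (Fin m → FreeGroup (Fin n))
  | .inl i => {f | (∀ j, (f j).norm ≤ p) ∧ (f i).norm < 2 * L}
  | .inr (x, y) => {f | (∀ j, (f j).norm ≤ p) ∧ (∀ i, 2 * L ≤ (f i).norm) ∧ x ≠ y ∧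
      (sgnElt f x).toWord.take L = (sgnElt f y).toWord.take L}

open FreeGroup in
theorem aux_badSet (m n p L : ℕ) (hp : 3 * L ≤ p) (k) :
    (badSet m n p L k).Finite ∧
    (badSet m n p L k).ncard ≤ ballCount n (p - L) * ballCount n p ^ (m - 1) := by
  rcases k with i | ⟨x, y⟩
  · refine aux_count p (p - L) _ i (fun f hf => hf.1) (fun f => f i) ?_ ?_
    · intro f hf; have := hf.2; omega
    · intro f _ g _ h _; exact h
  · have hd : ∀ f : Fin m → FreeGroup (Fin n), (mk ((sgnElt f x).toWord.drop L)).toWord =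
        (sgnElt f x).toWord.drop L := by
      intro f
      rw [toWord_mk, IsReduced.reduce_eq]
      exact isReduced_toWord.infix (List.drop_suffix _ _).isInfix
    have hs : ∀ f : Fin m → FreeGroup (Fin n), ∀ x, (sgnElt f x).norm = (f x.1).norm := by
      rintro f ⟨i, b⟩; cases b <;> simp [sgnElt]
    refine aux_count p (p - L) _ x.1 (fun f hf => hf.1)
      (fun f => mk ((sgnElt f x).toWord.drop L)) ?_ ?_
    · intro f hf
      have := hf.1 x.1
      rw [← hs f x] at this
      simp only [FreeGroup.norm] at this ⊢
      rw [hd, List.length_drop]; omega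
    · intro f hf g hg e hj
      have e := congrArg toWord e
      simp only [hd] at e
      have key : (sgnElt f x).toWord.take L = (sgnElt g x).toWord.take L := by
        by_cases hxy : y.1 = x.1
        · have hk : ∀ f ∈ badSet m n p L (.inr (x, y)), (sgnElt f x).toWord.take L =
              (invRev ((sgnElt f x).toWord.drop L)).take L := by
            intro f hf
            obtain ⟨_, h2, h3, h4⟩ := hf
            have hy : sgnElt f y = (sgnElt f x)⁻¹ := by
              obtain ⟨i, b⟩ := x
              obtain ⟨j, c⟩ := y
              simp only at hxy
              subst hxy
              cases b <;> cases c <;> simp [sgnElt] at h3 ⊢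
            have h5 := h2 x.1
            rw [← hs f x] at h5
            simp only [FreeGroup.norm] at h5
            conv_lhs => rw [h4, hy, toWord_inv, ← List.take_append_drop L (sgnElt f x).toWord,
              invRev_append]
            rw [List.take_append_of_le_length]
            rw [invRev_length, List.length_drop]; omega
          rw [hk f hf, hk g hg, e]
        · rw [hf.2.2.2, hg.2.2.2]
          simp only [sgnElt, hj _ hxy]
      have : sgnElt f x = sgnElt g x := by
        apply toWord_injective
        rw [← List.take_append_drop L (sgnElt f x).toWord, key, e, List.take_append_drop]
      obtain ⟨i, b⟩ := x
      cases b <;> simpa [sgnElt] using this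

theorem aux_total {m n : ℕ} (hn : 1 < n) (p L : ℕ) (hL : 2 ≤ L) (hp : 3 * L ≤ p) :
    Nat.card {f : Fin m → FreeGroup (Fin n) //
          Function.Surjective (FreeGroup.lift f) ∧
          ∀ i, FreeGroup.norm (f i) ≤ p} ≤
      Fintype.card (Fin m ⊕ (Fin m × Bool) × (Fin m × Bool)) *
        (ballCount n (p - L) * ballCount n p ^ (m - 1)) := by
  have hsub : {f : Fin m → FreeGroup (Fin n) | Function.Surjective (FreeGroup.lift f) ∧
          ∀ i, FreeGroup.norm (f i) ≤ p} ⊆ ⋃ k, badSet m n p L k := by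
    rintro f ⟨h1, h2⟩
    rw [Set.mem_iUnion]
    rcases aux_bad hn f L hL h1 with ⟨i, hi⟩ | ⟨h3, x, y, h4, h5⟩
    · exact ⟨.inl i, h2, hi⟩
    · exact ⟨.inr (x, y), h2, h3, h4, h5⟩
  have h1 := Set.ncard_le_ncard hsub (Set.finite_iUnion fun k => (aux_badSet m n p L hp k).1)
  have h2 := Set.ncard_iUnion_le_of_fintype (badSet m n p L)
  have h3 := Finset.sum_le_card_nsmul Finset.univ (fun k => (badSet m n p L k).ncard) _
    (fun k _ => (aux_badSet m n p L hp k).2)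
  rw [smul_eq_mul, Finset.card_univ] at h3
  exact h1.trans (h2.trans h3)

/-- Let `G` be the free group on `m ≥ 1` generators and `H` the free
group of rank `n > 1`. The set of surjective homomorphisms `G → H`, identified with
`m`-tuples of elements of `H`, has asymptotic density `0` in `H^m`. -/
theorem density_zero_surjective {m n : ℕ} (hm : 1 ≤ m) (hn : 1 < n) :
    Filter.Tendsto (fun p : ℕ =>
      (Nat.card {f : Fin m → FreeGroup (Fin n) //
          Function.Surjective (FreeGroup.lift f) ∧
          ∀ i, FreeGroup.norm (f i) ≤ p} : ℝ) / (ballCount n p : ℝ) ^ m)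
      Filter.atTop (nhds 0) := by
  set K := Fintype.card (Fin m ⊕ (Fin m × Bool) × (Fin m × Bool)) with hK
  have hlim : Filter.Tendsto (fun p : ℕ => (K : ℝ) * (1 / 2 : ℝ) ^ (p / 3)) Filter.atTop
      (nhds 0) := by
    have h1 : Filter.Tendsto (fun p : ℕ => p / 3) Filter.atTop Filter.atTop :=
      Nat.tendsto_div_const_atTop (by norm_num)
    have h2 := (tendsto_pow_atTop_nhds_zero_of_lt_one (r := (1 / 2 : ℝ)) (by norm_num)
      (by norm_num)).comp h1
    simpa using h2.const_mul (K : ℝ)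
  refine squeeze_zero' (Filter.Eventually.of_forall fun p => by positivity) ?_ hlim
  filter_upwards [Filter.eventually_ge_atTop 6] with p hp
  have ht := aux_total (m := m) hn p (p / 3) (by omega) (by omega)
  rw [← hK] at ht
  have hg := aux_grow_pow hn (p - p / 3) (p / 3)
  rw [Nat.sub_add_cancel (by omega)] at hg
  have hpos : 0 < ballCount n p := by
    have : Nonempty {w : FreeGroup (Fin n) // FreeGroup.norm w ≤ p} := ⟨⟨1, by simp⟩⟩
    exact Nat.card_pos
  have hpos' : (0 : ℝ) < ballCount n p := by exact_mod_cast hpos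
  rw [div_le_iff₀ (by positivity)]
  have ht' := (Nat.cast_le (α := ℝ)).mpr ht
  have hg' := (Nat.cast_le (α := ℝ)).mpr hg
  push_cast at ht' hg'
  refine ht'.trans ?_
  obtain ⟨m, rfl⟩ : ∃ k, m = k + 1 := ⟨m - 1, by omega⟩
  simp only [Nat.add_sub_cancel]
  have hb : (ballCount n (p - p / 3) : ℝ) ≤ (1 / 2 : ℝ) ^ (p / 3) * ballCount n p := by
    rw [one_div, inv_pow, inv_mul_eq_div, le_div_iff₀ (by positivity)]
    linarith
  calc (K : ℝ) * (ballCount n (p - p / 3) * ballCount n p ^ m)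
      ≤ K * (((1 / 2 : ℝ) ^ (p / 3) * ballCount n p) * ballCount n p ^ m) := by gcongr
    _ = _ := by ring
end

section
/- Let H be a free group of rank n > 1, let G be the free group on generators a_1,…,a_m, and let φ : G → H be a homomorphism with remnant whose remnant length is at least l ≥ 1. Then the upper asymptotic density of the image subgroup φ(G) in H satisfies limsup_{p→∞} |φ(G) ∩ H_p| / |H_p| ≤ 16·n·(2n−1)^{−⌈l/2⌉}. -/
namespace RemProof
open FreeGroup

/-- Inverse letter. -/
def fl {α : Type} (x : α × Bool) : α × Bool := (x.1, !x.2)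

lemma fl_fl {α : Type} (x : α × Bool) : fl (fl x) = x := by simp [fl]

lemma red_iff {α : Type} (x y : α × Bool) : (x.1 = y.1 → x.2 = y.2) ↔ y ≠ fl x := by
  rcases x with ⟨a, b⟩
  rcases y with ⟨c, d⟩
  cases b <;> cases d <;> simp [fl, eq_comm]

lemma mk_fl {α : Type} (x : α × Bool) : (mk [fl x]) = (mk [x])⁻¹ := by
  rw [inv_mk]; simp [invRev, fl]

/-- Common prefix length. -/
def cp {α : Type} [DecidableEq α] : List α → List α → ℕ
  | [], _ => 0
  | _ :: _, [] => 0
  | x :: A, y :: B => if x = y then cp A B + 1 else 0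

lemma cp_ultra {α : Type} [DecidableEq α] : ∀ A B C : List α, min (cp A B) (cp B C) ≤ cp A C
  | [], _, _ => by simp [cp]
  | _ :: _, [], _ => by simp [cp]
  | _ :: _, _ :: _, [] => by simp [cp]
  | x :: A, y :: B, z :: C => by
    have := cp_ultra A B C
    by_cases h1 : x = y
    · by_cases h2 : y = z
      · subst h1; subst h2; simp only [cp, if_true]; omega
      · simp [cp, h2]
    · simp [cp, h1]

lemma norm_mk_red {β : Type} [DecidableEq β] {L : List (β × Bool)} (h : IsReduced L) :
    norm (mk L) = L.length := by
  rw [FreeGroup.norm, toWord_mk, h.reduce_eq]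

lemma isReduced_invRev {β : Type} [DecidableEq β] {L : List (β × Bool)} (h : IsReduced L) :
    IsReduced (invRev L) := by
  rw [isReduced_iff_reduce_eq, reduce_invRev, h.reduce_eq]

lemma norm_cp {β : Type} [DecidableEq β] : ∀ A B : List (β × Bool), IsReduced A → IsReduced B →
    norm ((mk A)⁻¹ * mk B) + 2 * cp A B = A.length + B.length
  | [], B, _, hB => by
    have : (mk ([] : List (β × Bool))) = 1 := rfl
    simp [cp, this, norm_mk_red hB]
  | x :: A, [], hA, _ => by
    have : (mk ([] : List (β × Bool))) = 1 := rfl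
    rw [this, mul_one, norm_inv_eq, norm_mk_red hA]; simp [cp]
  | x :: A, y :: B, hA, hB => by
    by_cases h : x = y
    · subst h
      have e1 : (mk (x :: A)) = mk [x] * mk A := by rw [mul_mk]; rfl
      have e2 : (mk (x :: B)) = mk [x] * mk B := by rw [mul_mk]; rfl
      have := norm_cp A B (List.IsChain.tail hA) (List.IsChain.tail hB)
      rw [e1, e2]
      have e3 : (mk [x] * mk A)⁻¹ * (mk [x] * mk B) = (mk A)⁻¹ * mk B := by group
      rw [e3]; simp only [cp, if_true, List.length_cons]; omega
    · have hr : IsReduced (invRev (x :: A) ++ (y :: B)) := by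
        rw [FreeGroup.IsReduced, List.isChain_append]
        refine ⟨isReduced_invRev hA, hB, ?_⟩
        intro a ha b hb
        rw [red_iff]
        simp [invRev] at ha hb
        subst ha; subst hb
        intro hh; apply h; rw [hh]; simp [fl]
      rw [inv_mk, mul_mk, norm_mk_red hr]
      simp [cp, h]

/-- Gromov product. -/
def gp {β : Type} [DecidableEq β] (a b : FreeGroup β) : ℕ := cp a.toWord b.toWord

section
variable {β : Type} [DecidableEq β]

lemma gp_norm (a b : FreeGroup β) : norm (a⁻¹ * b) + 2 * gp a b = norm a + norm b := by
  have := norm_cp a.toWord b.toWord isReduced_toWord isReduced_toWord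
  rwa [mk_toWord, mk_toWord] at this

lemma gp_ultra (a b c : FreeGroup β) : min (gp a b) (gp b c) ≤ gp a c := cp_ultra _ _ _

lemma gp_comm (a b : FreeGroup β) : gp a b = gp b a := by
  have h1 := gp_norm a b
  have h2 := gp_norm b a
  have : norm (a⁻¹ * b) = norm (b⁻¹ * a) := by rw [← norm_inv_eq]; congr 1; group
  omega

lemma cancelLen_eq (a b : FreeGroup β) : cancelLen a b = gp a⁻¹ b := by
  have := gp_norm a⁻¹ b
  rw [inv_inv, norm_inv_eq] at this
  unfold cancelLen; omega

lemma gp_one (a : FreeGroup β) : gp 1 a = 0 := by simp [gp, cp]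

lemma exists_prefix (a : FreeGroup β) (k : ℕ) (hk : k ≤ norm a) :
    ∃ T : FreeGroup β, norm T = k ∧ norm (T⁻¹ * a) = norm a - k := by
  refine ⟨mk (a.toWord.take k), ?_⟩
  have e : (mk (a.toWord.take k))⁻¹ * a = mk (a.toWord.drop k) := by
    rw [inv_mul_eq_iff_eq_mul, mul_mk, List.take_append_drop, mk_toWord]
  rw [e]
  have h1 := norm_mk_le (L₁ := a.toWord.take k)
  have h2 := norm_mk_le (L₁ := a.toWord.drop k)
  have h3 := norm_mul_le (mk (a.toWord.take k)) (mk (a.toWord.drop k))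
  rw [mul_mk, List.take_append_drop, mk_toWord] at h3
  simp only [List.length_take, List.length_drop] at h1 h2
  have : norm a = a.toWord.length := rfl
  omega
end

/-! ball growth -/
lemma exists_bad {n : ℕ} (hn : 1 < n) (u : FreeGroup (Fin n)) :
    ∃ e : Fin (2 * n - 1) → Fin n × Bool, Function.Injective e ∧
      ∀ j, (u * mk [e j]).toWord = u.toWord ++ [e j] := by
  obtain ⟨b, hb⟩ : ∃ b : Fin n × Bool, ∀ x, x ≠ b →
      (u * mk [x]).toWord = u.toWord ++ [x] := by
    rcases List.eq_nil_or_concat u.toWord with h | ⟨L, y, h⟩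
    · refine ⟨(⟨0, by omega⟩, true), fun x _ => ?_⟩
      rw [toWord_mul, h, toWord_mk, List.nil_append, reduce_singleton]; simp [reduce_singleton]
    · refine ⟨fl y, fun x hx => ?_⟩
      have hr : IsReduced (u.toWord ++ [x]) := by
        rw [FreeGroup.IsReduced, List.isChain_append]
        refine ⟨isReduced_toWord, IsReduced.singleton, ?_⟩
        intro a ha b hb
        rw [red_iff]
        simp [h] at ha hb
        subst ha; subst hb; exact hx
      rw [toWord_mul, toWord_mk, reduce_singleton, hr.reduce_eq]
  have hc : Fintype.card {x : Fin n × Bool // x ≠ b} = 2 * n - 1 := by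
    rw [Fintype.card_subtype_compl]; simp [mul_comm]
  let E := (Fintype.equivFinOfCardEq hc).symm
  exact ⟨fun j => (E j).1, fun i j h => E.injective (Subtype.ext h), fun j => hb _ (E j).2⟩

lemma ball_finite (n p : ℕ) : Finite {w : FreeGroup (Fin n) // norm w ≤ p} := by
  have := List.finite_length_le (Fin n × Bool) p
  have h2 : ({w : FreeGroup (Fin n) | norm w ≤ p}).Finite :=
    Set.Finite.preimage (f := toWord) toWord_injective.injOn this
  exact h2

lemma ball_succ {n : ℕ} (hn : 1 < n) (p : ℕ) :
    (2 * n - 1) * ballCount n p ≤ ballCount n (p + 1) := by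
  choose e he1 he2 using exists_bad hn
  have := ball_finite n (p + 1)
  have := ball_finite n p
  let F : Fin (2 * n - 1) × {w : FreeGroup (Fin n) // norm w ≤ p} →
      {w : FreeGroup (Fin n) // norm w ≤ p + 1} :=
    fun x => ⟨x.2.1 * mk [e x.2.1 x.1], by
      rw [FreeGroup.norm, he2]; have := x.2.2; rw [FreeGroup.norm] at this; simpa using this⟩
  have hF : Function.Injective F := by
    rintro ⟨j, u⟩ ⟨j', u'⟩ h
    have h1 := congrArg (fun w => toWord w.1) h
    simp only [F, he2] at h1
    have h2 := List.append_inj' h1 rfl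
    have h3 : u = u' := Subtype.ext (toWord_injective h2.1)
    subst h3
    have h4 : e u.1 j = e u.1 j' := by simpa using h2.2
    rw [he1 _ h4]
  have := Nat.card_le_card_of_injective F hF
  rw [Nat.card_prod, Nat.card_fin] at this
  exact this

lemma ball_add {n : ℕ} (hn : 1 < n) (p k : ℕ) :
    (2 * n - 1) ^ k * ballCount n p ≤ ballCount n (p + k) := by
  induction k with
  | zero => simp
  | succ k ih =>
    calc (2 * n - 1) ^ (k + 1) * ballCount n p = (2 * n - 1) * ((2 * n - 1) ^ k * ballCount n p) := by ring
      _ ≤ (2 * n - 1) * ballCount n (p + k) := Nat.mul_le_mul_left _ ih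
      _ ≤ _ := ball_succ hn _

lemma ball_pos (n p : ℕ) : 1 ≤ ballCount n p := by
  have := ball_finite n p
  have : Nonempty {w : FreeGroup (Fin n) // norm w ≤ p} := ⟨⟨1, by simp⟩⟩
  exact Nat.card_pos

section
variable {m n : ℕ} (φ : FreeGroup (Fin m) →* FreeGroup (Fin n)) (Λ : Fin m × Bool → ℕ) (l : ℕ)

lemma h_fl (x : Fin m × Bool) : φ (mk [fl x]) = (φ (mk [x]))⁻¹ := by rw [mk_fl, _root_.map_inv]

lemma mk_cons' (x : Fin m × Bool) (L) : φ (mk (x :: L)) = φ (mk [x]) * φ (mk L) := by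
  rw [← _root_.map_mul, mul_mk]; rfl

/-- The data: `Λ` bounds the cancellation, and the remnants have length at least `l`. -/
structure Good : Prop where
  F1 : ∀ x y, x ≠ y → gp (φ (mk [x])) (φ (mk [y])) ≤ Λ x
  F2 : ∀ x, Λ x + Λ (fl x) + l ≤ norm (φ (mk [x]))
  hl : 1 ≤ l

/-- `v` starts in direction `y`. -/
def Dir (y : Fin m × Bool) (v : FreeGroup (Fin n)) : Prop := Λ y < gp v (φ (mk [y]))

variable {φ Λ l}

lemma uniq (G : Good φ Λ l) {x y : Fin m × Bool} {v : FreeGroup (Fin n)} (h : Dir φ Λ y v)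
    (hxy : x ≠ y) : gp v (φ (mk [x])) ≤ Λ x := by
  by_contra hc
  have h1 := gp_ultra (φ (mk [x])) v (φ (mk [y]))
  rw [gp_comm _ v] at h1
  have h2 := G.F1 x y hxy
  have h3 := G.F1 y x hxy.symm
  rw [gp_comm] at h3
  unfold Dir at h
  omega

lemma uniq' (G : Good φ Λ l) {x y : Fin m × Bool} {v : FreeGroup (Fin n)} (h : Dir φ Λ y v)
    (h' : Dir φ Λ x v) : x = y := by
  by_contra hc
  have := uniq G h hc
  unfold Dir at h'
  omega

lemma step {z : Fin m × Bool} {v : FreeGroup (Fin n)}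
    (h : gp v (φ (mk [fl z])) ≤ Λ (fl z)) :
    norm (φ (mk [z])) ≤ gp (φ (mk [z]) * v) (φ (mk [z])) + Λ (fl z) := by
  have h1 := gp_norm (φ (mk [z]) * v) (φ (mk [z]))
  have h2 := gp_norm (φ (mk [fl z])) v
  rw [gp_comm] at h2
  have e1 : (φ (mk [z]) * v)⁻¹ * φ (mk [z]) = v⁻¹ := by group
  rw [e1, norm_inv_eq] at h1
  rw [h_fl] at h h2
  rw [inv_inv, norm_inv_eq] at h2
  omega

lemma chain (G : Good φ Λ l) (v : FreeGroup (Fin n)) : ∀ (L : List (Fin m × Bool))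
    (z : Fin m × Bool), FreeGroup.IsReduced (z :: L) →
    (∀ x ∈ (z :: L).getLast?, gp v (φ (mk [fl x])) ≤ Λ (fl x)) →
    norm (φ (mk [z])) ≤ gp (φ (mk (z :: L)) * v) (φ (mk [z])) + Λ (fl z)
  | [], z, _, hv => step (hv z (by simp))
  | z' :: L, z, hr, hv => by
    rw [FreeGroup.IsReduced, List.isChain_cons_cons, red_iff] at hr
    have ih := chain G v L z' hr.2 (by simpa using hv)
    rw [mk_cons' φ z (z' :: L), mul_assoc]
    apply step
    apply uniq G (y := z') _ hr.1.symm
    unfold Dir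
    have := G.F2 z'
    have := G.hl
    omega

lemma chainD (G : Good φ Λ l) (v : FreeGroup (Fin n)) (L : List (Fin m × Bool))
    (z : Fin m × Bool) (hr : FreeGroup.IsReduced (z :: L))
    (hv : ∀ x ∈ (z :: L).getLast?, gp v (φ (mk [fl x])) ≤ Λ (fl x)) :
    Dir φ Λ z (φ (mk (z :: L)) * v) := by
  have := chain G v L z hr hv
  have := G.F2 z
  have := G.hl
  unfold Dir
  omega

lemma cosetA (G : Good φ Λ l) {y y' : Fin m × Bool} {v v' : FreeGroup (Fin n)}
    (hy : Dir φ Λ y v) (hy' : Dir φ Λ y' v') (hy2 : Dir φ Λ (fl y') (φ (mk [fl y']) * v'))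
    (L : List (Fin m × Bool)) (hL : FreeGroup.IsReduced L)
    (hlast : ∀ x ∈ L.getLast?, x ≠ fl y) (he : φ (mk L) * v = v') : y.1 = y'.1 := by
  have key : ∀ x ∈ L.getLast?, gp v (φ (mk [fl x])) ≤ Λ (fl x) := by
    intro x hx
    apply uniq G hy
    intro h
    exact hlast x hx (by rw [← h, fl_fl])
  rcases L with _ | ⟨z, L⟩
  · have : v = v' := by rw [← he]; exact (by rw [show (mk ([] : List (Fin m × Bool))) = 1 from rfl]; simp)
    subst this
    rw [uniq' G hy hy']
  · have h1 := chainD G v L z hL key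
    rw [he] at h1
    have hz := uniq' G hy' h1
    subst hz
    rw [mk_cons', mul_assoc] at he
    have he2 : φ (mk L) * v = φ (mk [fl z]) * v' := by rw [← he, h_fl]; group
    rcases L with _ | ⟨z', L⟩
    · have : v = φ (mk [fl z]) * v' := by
        rw [← he2]; exact (by rw [show (mk ([] : List (Fin m × Bool))) = 1 from rfl]; simp)
      rw [← this] at hy2
      rw [uniq' G hy2 hy]; rfl
    · rw [FreeGroup.IsReduced, List.isChain_cons_cons, red_iff] at hL
      have h2 := chainD G v L z' hL.2 (by simpa using key)
      rw [he2] at h2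
      exact absurd (uniq' G hy2 h2) hL.1

lemma coset (G : Good φ Λ l) {y y' : Fin m × Bool} {v v' : FreeGroup (Fin n)}
    (hy : Dir φ Λ y v) (hyi : Dir φ Λ (fl y) (φ (mk [fl y]) * v))
    (hy' : Dir φ Λ y' v') (hy2 : Dir φ Λ (fl y') (φ (mk [fl y']) * v'))
    (g : FreeGroup (Fin m)) (he : φ g * v = v') : y.1 = y'.1 := by
  have hr := isReduced_toWord (x := g)
  rw [← mk_toWord (x := g)] at he
  by_cases hlast : ∀ x ∈ g.toWord.getLast?, x ≠ fl y
  · exact cosetA G hy hy' hy2 _ hr hlast he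
  · push Not at hlast
    obtain ⟨x, hx, rfl⟩ := hlast
    obtain ⟨L, hL⟩ := List.mem_getLast?_eq_getLast hx |> fun ⟨h, e⟩ =>
      (⟨g.toWord.dropLast, by rw [e, List.dropLast_append_getLast]⟩ :
        ∃ L, g.toWord = L ++ [fl y])
    rw [hL] at hr he
    rw [FreeGroup.IsReduced, List.isChain_append] at hr
    refine cosetA (y := fl y) G hyi hy' hy2 L hr.1 ?_ ?_
    · intro x hx h
      have := hr.2.2 x hx (fl y) (by simp)
      rw [red_iff, h, fl_fl] at this
      exact this rfl
    · rw [← mul_assoc, ← _root_.map_mul, mul_mk, he]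

lemma exists_T (G : Good φ Λ l) (hl2 : 2 ≤ l) : ∃ T : Fin m × Bool → FreeGroup (Fin n),
    (∀ y, T (fl y) = φ (mk [fl y]) * T y) ∧ (∀ y, Dir φ Λ y (T y)) ∧
    (∀ y, Λ y + l / 2 ≤ norm (T y)) ∧
    (∀ y, norm (T y) + Λ (fl y) ≤ norm (φ (mk [y]))) ∧
    (∀ y, gp (T y) (φ (mk [y])) = norm (T y)) := by
  have H : ∀ i : Fin m, ∃ T : FreeGroup (Fin n), norm T = Λ (i, true) + l / 2 ∧
      norm (T⁻¹ * φ (mk [(i, true)])) = norm (φ (mk [(i, true)])) - (Λ (i, true) + l / 2) :=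
    fun i => exists_prefix _ _ (by have := G.F2 (i, true); omega)
  choose T hT1 hT2 using H
  have hflt : ∀ i : Fin m, fl (i, true) = (i, false) := fun i => rfl
  have hflf : ∀ i : Fin m, fl (i, false) = (i, true) := fun i => rfl
  have hinv : ∀ i : Fin m, φ (mk [(i, false)]) = (φ (mk [(i, true)]))⁻¹ := fun i => h_fl φ (i, true)
  let S : Fin m × Bool → FreeGroup (Fin n) := fun y =>
    if y.2 then T y.1 else φ (mk [(y.1, false)]) * T y.1
  have hSt : ∀ i, S (i, true) = T i := fun i => by simp [S]
  have hSf : ∀ i, S (i, false) = φ (mk [(i, false)]) * T i := fun i => by simp [S]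
  have hN : ∀ i, norm (S (i, false)) = norm (φ (mk [(i, true)])) - (Λ (i, true) + l / 2) := by
    intro i
    rw [hSf, ← hT2, ← norm_inv_eq, hinv]; congr 1; group
  have hnf : ∀ i, norm (φ (mk [(i, false)])) = norm (φ (mk [(i, true)])) := by
    intro i; rw [hinv, norm_inv_eq]
  have hgp : ∀ y, gp (S y) (φ (mk [y])) = norm (S y) := by
    rintro ⟨i, b⟩
    have h2 := G.F2 (i, true)
    have := gp_norm (S (i, b)) (φ (mk [(i, b)]))
    cases b
    · rw [hnf, hN] at this
      rw [hN]
      have e : (S (i, false))⁻¹ * φ (mk [(i, false)]) = (T i)⁻¹ := by rw [hSf]; group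
      rw [e, norm_inv_eq, hT1] at this
      omega
    · rw [hSt, hT2] at this
      rw [hSt]
      have := hT1 i
      omega
  have h3 : ∀ y, Λ y + l / 2 ≤ norm (S y) := by
    rintro ⟨i, b⟩
    have h2 := G.F2 (i, true)
    rw [hflt] at h2
    cases b
    · rw [hN]; omega
    · rw [hSt, hT1]
  refine ⟨S, ?_, ?_, h3, ?_, hgp⟩
  · rintro ⟨i, b⟩
    cases b
    · rw [hflf, hSt, hSf, hinv]; group
    · rw [hflt, hSt, hSf]
  · intro y
    unfold Dir
    rw [hgp]
    have := h3 y
    omega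
  · rintro ⟨i, b⟩
    have h2 := G.F2 (i, true)
    rw [hflt] at h2
    cases b
    · rw [hN, hflf, hnf]; omega
    · rw [hSt, hT1, hflt]; omega

lemma grp1 {H : Type*} [Group H] {a b w w' : H} (h : a⁻¹ * w = b⁻¹ * w') :
    w' * w⁻¹ * a = b := by
  have : w' = b * (a⁻¹ * w) := by rw [h]; group
  rw [this]; group

lemma grp2 {H : Type*} [Group H] {a b w w' : H} (h : a⁻¹ * w = (b * a)⁻¹ * w') :
    w' = b * w := by
  have : w = a * ((b * a)⁻¹ * w') := by rw [← h]; group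
  rw [this]; group

lemma count (G : Good φ Λ l) (hl2 : 2 ≤ l) (p : ℕ) :
    Nat.card {w : FreeGroup (Fin n) // w ∈ φ.range ∧ norm w ≤ p + l / 2} ≤ 2 * ballCount n p := by
  obtain ⟨T, T1, T2, T3, T4, T5⟩ := exists_T G hl2
  have hf := ball_finite n p
  have hx : ∀ w : FreeGroup (Fin n), w ∈ φ.range → w ≠ 1 → ∃ (y : Fin m × Bool) (X : _),
      FreeGroup.IsReduced (y :: X) ∧ φ (mk (y :: X)) = w := by
    rintro w ⟨g, rfl⟩ hw
    have hr := isReduced_toWord (x := g)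
    rcases hg : g.toWord with _ | ⟨y, X⟩
    · rw [toWord_eq_nil_iff] at hg
      simp [hg] at hw
    · exact ⟨y, X, hg ▸ hr, by rw [← hg, mk_toWord]⟩
  rcases isEmpty_or_nonempty (Fin m) with hm | hm
  · have hs : Subsingleton {w : FreeGroup (Fin n) // w ∈ φ.range ∧ norm w ≤ p + l / 2} := by
      constructor
      rintro ⟨w, ⟨g, rfl⟩, hp⟩ ⟨w', ⟨g', rfl⟩, hp'⟩
      have : g = g' := Subsingleton.elim _ _
      subst this; rfl
    have h1 := Finite.card_le_one_iff_subsingleton.mpr hs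
    have h2 := ball_pos n p
    omega
  choose! Y X hY1 hY2 using hx
  have hone : ∀ L : List (Fin m × Bool), ∀ x ∈ L.getLast?,
      gp (1 : FreeGroup (Fin n)) (φ (mk [fl x])) ≤ Λ (fl x) := by
    intro L x _; rw [gp_one]; omega
  have hpre : ∀ w ∈ φ.range, w ≠ 1 → norm ((T (Y w))⁻¹ * w) + l / 2 ≤ norm w := by
    intro w hw hw1
    have h1 := chain G 1 (X w) (Y w) (hY1 w hw hw1) (hone _)
    rw [hY2 w hw hw1, mul_one] at h1
    have h2 := gp_norm (T (Y w)) w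
    have h3 := gp_ultra (T (Y w)) (φ (mk [Y w])) w
    rw [gp_comm _ w, T5] at h3
    have h4 := T4 (Y w)
    have h5 := T3 (Y w)
    omega
  have hdir : ∀ w ∈ φ.range, w ≠ 1 → Dir φ Λ (Y w) w := by
    intro w hw hw1
    have h1 := chainD G 1 (X w) (Y w) (hY1 w hw hw1) (hone _)
    rwa [hY2 w hw hw1, mul_one] at h1
  have hinj : ∀ w ∈ φ.range, w ≠ 1 → ∀ w' ∈ φ.range, w' ≠ 1 →
      (T (Y w))⁻¹ * w = (T (Y w'))⁻¹ * w' → w = w' := by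
    intro w hw hw1 w' hw' hw1' he
    have hD := hdir w hw hw1
    have hD' := hdir w' hw' hw1'
    obtain ⟨g, hg⟩ := hw
    obtain ⟨g', hg'⟩ := hw'
    have hT2 : ∀ y, Dir φ Λ (fl y) (φ (mk [fl y]) * T y) := by
      intro y; rw [← T1]; exact T2 _
    have h1 : (Y w).1 = (Y w').1 := by
      refine coset G (T2 (Y w)) (hT2 _) (T2 (Y w')) (hT2 _) (g' * g⁻¹) ?_
      rw [_root_.map_mul, _root_.map_inv, hg, hg']
      exact grp1 he
    by_cases h2 : Y w = Y w'
    · rw [h2] at he; exact mul_left_cancel he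
    · exfalso
      have h3 : Y w' = fl (Y w) := by
        by_contra hc
        rw [← ne_eq, ← red_iff] at hc
        exact h2 (Prod.ext h1 (hc h1))
      rw [h3, T1] at he
      have h4 : w' = φ (mk [fl (Y w)]) * w := grp2 he
      have hw2 := hY2 w ⟨g, hg⟩ hw1
      rw [mk_cons'] at hw2
      have h5 : w' = φ (mk (X w)) := by rw [h4, h_fl, inv_mul_eq_iff_eq_mul]; exact hw2.symm
      have hr := hY1 w ⟨g, hg⟩ hw1
      rcases hX : X w with _ | ⟨x, L⟩
      · rw [hX] at h5
        apply hw1'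
        rw [h5]; exact _root_.map_one φ
      · rw [hX] at h5 hr
        rw [FreeGroup.IsReduced, List.isChain_cons_cons, red_iff] at hr
        have h6 := chainD G 1 L x hr.2 (hone _)
        rw [mul_one, ← h5] at h6
        have := uniq' G h6 hD'
        exact hr.1 (by rw [← this, h3])
  classical
  let F : {w : FreeGroup (Fin n) // w ∈ φ.range ∧ norm w ≤ p + l / 2} →
      Option {w : FreeGroup (Fin n) // norm w ≤ p} := fun w =>
    if h : w.1 = 1 then none else
      some ⟨(T (Y w.1))⁻¹ * w.1, by have := hpre w.1 w.2.1 h; have := w.2.2; omega⟩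
  have hF : Function.Injective F := by
    rintro ⟨w, hw, hp⟩ ⟨w', hw', hp'⟩ h
    apply Subtype.ext
    by_cases h1 : w = 1 <;> by_cases h2 : w' = 1
    · simp [h1, h2]
    · simp [F, h1, h2] at h
    · simp [F, h1, h2] at h
    · simp only [F, h1, h2, dite_false, Option.some.injEq, Subtype.mk.injEq] at h
      exact hinj w hw h1 w' hw' h2 h
  have h1 := Nat.card_le_card_of_injective F hF
  rw [Finite.card_option] at h1
  have h2 := ball_pos n p
  have h3 : ballCount n p = Nat.card {w : FreeGroup (Fin n) // norm w ≤ p} := rfl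
  omega

end

lemma good_of {m n l : ℕ} (hl : 1 ≤ l)
    (φ : FreeGroup (Fin m) →* FreeGroup (Fin n))
    (hrem : ∀ i, l ≤ remLen (fun j : Fin m => φ (FreeGroup.of j)) i) :
    ∃ Λ, Good φ Λ l := by
  set t := fun j : Fin m => φ (FreeGroup.of j) with ht
  have hinv : ∀ i : Fin m, φ (mk [(i, false)]) = (t i)⁻¹ := fun i => h_fl φ (i, true)
  have hpos : ∀ i : Fin m, φ (mk [(i, true)]) = t i := fun i => rfl
  have hpm : ∀ i b, pmPow b (t i) = φ (mk [(i, b)]) := by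
    intro i b; cases b
    · rw [hinv]; simp [pmPow]
    · rw [hpos]; simp [pmPow]
  refine ⟨fun x => if x.2 then leftCancel t x.1 else rightCancel t x.1, ?_, ?_, hl⟩
  · rintro ⟨i, b⟩ ⟨j, c⟩ hne
    cases b
    · have := Finset.le_sup (f := fun p : Fin m × Bool =>
        if p.1 = i ∧ p.2 = false then 0 else cancelLen (t i) (pmPow p.2 (t p.1)))
        (Finset.mem_univ (j, c))
      have hne' : ¬ (j = i ∧ c = false) := by rintro ⟨rfl, rfl⟩; exact hne rfl
      simp only [hne', if_false, cancelLen_eq, hpm, ← hinv] at this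
      simpa [rightCancel, cancelLen_eq, hpm, hinv] using this
    · have := Finset.le_sup (f := fun p : Fin m × Bool =>
        if p.1 = i ∧ p.2 = false then 0 else cancelLen (pmPow p.2 (t p.1)) (t i))
        (Finset.mem_univ (j, !c))
      have hne' : ¬ (j = i ∧ (!c) = false) := by rintro ⟨rfl, h⟩; simp at h; subst h; exact hne rfl
      simp only [hne', if_false, cancelLen_eq, hpm] at this
      rw [← h_fl, gp_comm] at this
      simpa [leftCancel, cancelLen_eq, hpm, hpos, fl] using this
  · rintro ⟨i, b⟩
    have := hrem i
    unfold remLen at this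
    cases b
    · rw [hinv, norm_inv_eq]; simp [fl]; omega
    · rw [hpos]; simp [fl]; omega

end RemProof

/-- Let `H` be the free group of rank `n > 1` and let
`φ : G → H` be a homomorphism from the free group on `m` generators with remnant length
at least `l ≥ 1`. Then the upper asymptotic density of the image subgroup `φ(G)` in `H`
is at most `16 * n * (2n - 1)^(-⌈l/2⌉)`. -/
theorem image_density_le_of_remnant {m n l : ℕ} (hn : 1 < n) (hl : 1 ≤ l)
    (φ : FreeGroup (Fin m) →* FreeGroup (Fin n))
    (hrem : ∀ i, l ≤ remLen (fun j : Fin m => φ (FreeGroup.of j)) i) :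
    Filter.limsup (fun p : ℕ =>
        (Nat.card {w : FreeGroup (Fin n) // w ∈ φ.range ∧ FreeGroup.norm w ≤ p} : ℝ) /
          (ballCount n p : ℝ))
      Filter.atTop
      ≤ 16 * n * ((2 * n - 1 : ℝ)) ^ (-(((l + 1) / 2 : ℕ) : ℤ)) := by
  have hq : (3 : ℝ) ≤ 2 * n - 1 := by
    have : (2 : ℝ) ≤ n := by exact_mod_cast hn
    linarith
  have hq00 : (0 : ℝ) < 2 * n - 1 := by linarith
  set q : ℝ := 2 * n - 1 with hqd
  have hcob : Filter.IsCoboundedUnder (· ≤ ·) Filter.atTop (fun p : ℕ =>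
        (Nat.card {w : FreeGroup (Fin n) // w ∈ φ.range ∧ FreeGroup.norm w ≤ p} : ℝ) /
          (ballCount n p : ℝ)) :=
    Filter.isCoboundedUnder_le_of_le Filter.atTop (x := 0) (fun p => by positivity)
  have hqk : q ^ (-(((l + 1) / 2 : ℕ) : ℤ)) = (q ^ ((l + 1) / 2))⁻¹ := by
    rw [zpow_neg, zpow_natCast]
  rw [hqk]
  refine Filter.limsup_le_of_le hcob ?_
  have hle : ∀ k, (l + 1) / 2 ≤ k + 1 → 2 * (q ^ k)⁻¹ ≤ 16 * n * (q ^ ((l + 1) / 2))⁻¹ := by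
    intro k hk
    have hq0 : 0 < q := by linarith
    have h1 : q ^ ((l + 1) / 2) ≤ q ^ (k + 1) := pow_le_pow_right₀ (by linarith) hk
    have h0 : 0 < q ^ ((l + 1) / 2) := by positivity
    have h2 : (q ^ (k + 1))⁻¹ ≤ (q ^ ((l + 1) / 2))⁻¹ := inv_anti₀ h0 h1
    have h3 : (q ^ k)⁻¹ = q * (q ^ (k + 1))⁻¹ := by rw [pow_succ]; field_simp
    rw [h3]
    have h4 : 0 < (q ^ (k + 1))⁻¹ := by positivity
    calc 2 * (q * (q ^ (k + 1))⁻¹) = (2 * q) * (q ^ (k + 1))⁻¹ := by ring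
      _ ≤ (16 * n) * (q ^ ((l + 1) / 2))⁻¹ := by
        apply mul_le_mul _ h2 h4.le (by positivity)
        linarith
  by_cases hl2 : 2 ≤ l
  · obtain ⟨Λ, G⟩ := RemProof.good_of hl φ hrem
    filter_upwards [Filter.eventually_ge_atTop (l / 2)] with p hp
    obtain ⟨r, rfl⟩ := Nat.exists_eq_add_of_le' hp
    refine le_trans ?_ (hle (l / 2) (by omega))
    have h1 := RemProof.count G hl2 r
    have h2 := RemProof.ball_add hn r (l / 2)
    have h1' : (Nat.card {w : FreeGroup (Fin n) // w ∈ φ.range ∧ FreeGroup.norm w ≤ r + l / 2} : ℝ)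
        ≤ 2 * ballCount n r := by exact_mod_cast h1
    have hc : ((2 * n - 1 : ℕ) : ℝ) = q := by
      rw [Nat.cast_sub (by omega)]; push_cast; rfl
    have h2' : q ^ (l / 2) * ballCount n r ≤ ballCount n (r + l / 2) := by
      rw [← hc]; exact_mod_cast h2
    have hb : (0 : ℝ) < ballCount n (r + l / 2) := by
      exact_mod_cast RemProof.ball_pos n (r + l / 2)
    have hqp : 0 < q ^ (l / 2) := by positivity
    rw [div_le_iff₀ hb]
    calc _ ≤ 2 * (ballCount n r : ℝ) := h1'
      _ = 2 * (q ^ (l / 2))⁻¹ * (q ^ (l / 2) * ballCount n r) := by field_simp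
      _ ≤ _ := mul_le_mul_of_nonneg_left h2' (by positivity)
  · refine Filter.Eventually.of_forall fun p => ?_
    refine le_trans ?_ (hle 0 (by omega))
    have hf := RemProof.ball_finite n p
    have h1 : Nat.card {w : FreeGroup (Fin n) // w ∈ φ.range ∧ FreeGroup.norm w ≤ p}
        ≤ ballCount n p :=
      Nat.card_le_card_of_injective
        (β := {w : FreeGroup (Fin n) // FreeGroup.norm w ≤ p})
        (fun w => ⟨w.1, w.2.2⟩) (fun a b h => Subtype.ext (congrArg (fun w => w.1) h))
    have h2 : (Nat.card {w : FreeGroup (Fin n) // w ∈ φ.range ∧ FreeGroup.norm w ≤ p} : ℝ) /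
          (ballCount n p : ℝ) ≤ 1 := div_le_one_of_le₀ (by exact_mod_cast h1) (by positivity)
    rw [pow_zero, inv_one]
    linarith
end
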